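/- arXiv:1603.08244 — 2 statements merged into one kernel-verified Lean document; each statement's English description precedes it below -/
import Mathlib

section
/- (Claim 3: strong converse part of Theorem 3.) For every rate pair (R_𝒴, R_𝒵) ∈ [0,∞)², all positive constants λ₁^𝒴, λ₂^𝒴, λ₁^𝒵, λ₂^𝒵 with λ₁^𝒴 + λ₂^𝒴 + λ₁^𝒵 + λ₂^𝒵 < 1, and every ε > 0, there exists η₀ ∈ ℕ such that for every blocklength n ≥ η₀ and all finite sets ℳ_𝒴, ℳ_𝒵 with |ℳ_𝒴| = ⌈exp(exp(n R_𝒴))⌉ and |ℳ_𝒵| = ⌈exp(exp(n R_𝒵))⌉, a necessary condition for an (n, ℳ_𝒴, ℳ_𝒵, λ₁^𝒴, λ₂^𝒴, λ₁^𝒵, λ₂^𝒵) average-error ID code for the BC W(y,z|x) to exist is that for some PMF P on 𝒳 both R_𝒴 < I(P, W_𝒴) + ε and R_𝒵 < I(P, W_𝒵) + ε hold. -/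
open scoped Classical
open Finset

noncomputable section

/-- `P` is a probability mass function on the finite type `X`. -/
def IsPMF {X : Type*} [Fintype X] (P : X → ℝ) : Prop :=
  (∀ x, 0 ≤ P x) ∧ ∑ x, P x = 1

/-- `W` is a (discrete memoryless) channel from `X` to `Y`. -/
def IsChannel {X Y : Type*} [Fintype Y] (W : X → Y → ℝ) : Prop :=
  (∀ x y, 0 ≤ W x y) ∧ ∀ x, ∑ y, W x y = 1

/-- The `n`-fold memoryless extension `W^n(𝐲|𝐱) = ∏ᵢ W(yᵢ|xᵢ)`. -/
def Wn {X Y : Type*} (W : X → Y → ℝ) (n : ℕ) (x : Fin n → X) (y : Fin n → Y) : ℝ :=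
  ∏ i, W (x i) (y i)

/-- Mutual information `I(P,W)` (natural logarithm), with the convention that
terms with `P x * W x y = 0` contribute `0`. -/
def mutInf {X Y : Type*} [Fintype X] [Fintype Y] (P : X → ℝ) (W : X → Y → ℝ) : ℝ :=
  ∑ x, ∑ y, if P x * W x y = 0 then 0
    else P x * W x y * Real.log (W x y / ∑ x', P x' * W x' y)

/-- The error requirements of an `(n, M, l1, l2)` ID code for the DMC `W`:
maximum probability of missed identification at most `l1`, maximum probability
of wrong identification at most `l2`. -/
def IDCodeErr {X Y M : Type*} [Fintype X] [Fintype Y]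
    (n : ℕ) (W : X → Y → ℝ) (Q : M → (Fin n → X) → ℝ)
    (D : M → Finset (Fin n → Y)) (l1 l2 : ℝ) : Prop :=
  (∀ m, ∑ x, Q m x * ∑ y ∈ (D m)ᶜ, Wn W n x y ≤ l1) ∧
  (∀ m m', m ≠ m' → ∑ x, Q m x * ∑ y ∈ D m', Wn W n x y ≤ l2)

/-- `(n, M, l1, l2)` ID code for the DMC `W`. -/
def IsIDCode {X Y M : Type*} [Fintype X] [Fintype Y]
    (n : ℕ) (W : X → Y → ℝ) (Q : M → (Fin n → X) → ℝ)
    (D : M → Finset (Fin n → Y)) (l1 l2 : ℝ) : Prop :=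
  (∀ m, IsPMF (Q m)) ∧ IDCodeErr n W Q D l1 l2

/-- `W` is a two-receiver broadcast channel from `X` to `Y × Z`. -/
def IsBC {X Y Z : Type*} [Fintype Y] [Fintype Z] (W : X → Y → Z → ℝ) : Prop :=
  (∀ x y z, 0 ≤ W x y z) ∧ ∀ x, ∑ y, ∑ z, W x y z = 1

/-- Marginal channel to terminal `Y`. -/
def margY {X Y Z : Type*} [Fintype Z] (W : X → Y → Z → ℝ) : X → Y → ℝ :=
  fun x y => ∑ z, W x y z

/-- Marginal channel to terminal `Z`. -/
def margZ {X Y Z : Type*} [Fintype Y] (W : X → Y → Z → ℝ) : X → Z → ℝ :=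
  fun x z => ∑ y, W x y z

/-- `(n, ℳ_Y, ℳ_Z, l1Y, l2Y, l1Z, l2Z)` average-error ID code for the BC `W`:
every `Q my mz` is a PMF on `Xⁿ`, and the mixtures (averaging uniformly over the
other receiver's message) form ID codes for the marginal channels. -/
def IsBCIDCode {X Y Z : Type*} [Fintype X] [Fintype Y] [Fintype Z]
    (n kY kZ : ℕ) (W : X → Y → Z → ℝ)
    (Q : Fin kY → Fin kZ → (Fin n → X) → ℝ)
    (DY : Fin kY → Finset (Fin n → Y)) (DZ : Fin kZ → Finset (Fin n → Z))
    (l1Y l2Y l1Z l2Z : ℝ) : Prop :=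
  (∀ my mz, IsPMF (Q my mz)) ∧
  IDCodeErr n (margY W) (fun my x => (kZ : ℝ)⁻¹ * ∑ mz, Q my mz x) DY l1Y l2Y ∧
  IDCodeErr n (margZ W) (fun mz x => (kY : ℝ)⁻¹ * ∑ my, Q my mz x) DZ l1Z l2Z

/-- A rate pair is achievable for the BC `W` under the average-error criterion. -/
def BCAchievable {X Y Z : Type*} [Fintype X] [Fintype Y] [Fintype Z]
    (W : X → Y → Z → ℝ) (Rp : ℝ × ℝ) : Prop :=
  0 ≤ Rp.1 ∧ 0 ≤ Rp.2 ∧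
  ∀ l1Y l2Y l1Z l2Z : ℝ, 0 < l1Y → 0 < l2Y → 0 < l1Z → 0 < l2Z →
    ∃ n₀ : ℕ, ∀ n : ℕ, n₀ ≤ n →
      ∃ (kY kZ : ℕ) (Q : Fin kY → Fin kZ → (Fin n → X) → ℝ)
        (DY : Fin kY → Finset (Fin n → Y)) (DZ : Fin kZ → Finset (Fin n → Z)),
        IsBCIDCode n kY kZ W Q DY DZ l1Y l2Y l1Z l2Z ∧
        ((0 < Rp.1 → Rp.1 ≤ (1 / n) * Real.log (Real.log kY)) ∧ (Rp.1 = 0 → kY = 1)) ∧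
        ((0 < Rp.2 → Rp.2 ≤ (1 / n) * Real.log (Real.log kZ)) ∧ (Rp.2 = 0 → kZ = 1))

/-- Second moment of a sum of independent centred variables, in finite-sum form. -/
lemma sum_prod_mul_sum_sq {ι α : Type*} [Fintype ι] [DecidableEq ι] [Fintype α] (p g : ι → α → ℝ)
    (hp : ∀ i, ∑ a, p i a = 1) (hg : ∀ i, ∑ a, p i a * g i a = 0) :
    ∑ y : ι → α, (∏ i, p i (y i)) * (∑ i, g i (y i)) ^ 2 = ∑ i, ∑ a, p i a * g i a ^ 2 := by
  have key : ∀ i j, ∑ y : ι → α, (∏ k, p k (y k)) * (g i (y i) * g j (y j)) =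
      if i = j then ∑ a, p i a * g i a ^ 2 else 0 := by
    intro i j
    have h1 : ∀ y : ι → α, (∏ k, p k (y k)) * (g i (y i) * g j (y j)) =
        ∏ k, (p k (y k) * ((if k = i then g k (y k) else 1) * (if k = j then g k (y k) else 1))) := by
      intro y
      simp only [Finset.prod_mul_distrib, Finset.prod_ite_eq', Finset.mem_univ, if_true]
    simp_rw [h1]
    rw [← Fintype.piFinset_univ, ← Finset.prod_univ_sum (fun _ => (univ : Finset α))
      (fun k a => p k a * ((if k = i then g k a else 1) * (if k = j then g k a else 1)))]
    split_ifs with hij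
    · subst hij
      rw [Finset.prod_eq_single i]
      · simp [sq]
      · intro b _ hb
        simp [hb, hp]
      · simp
    · exact Finset.prod_eq_zero (mem_univ i) (by simp [hij, hg])
  simp_rw [sq (∑ i, _), Finset.sum_mul_sum, Finset.mul_sum]
  rw [Finset.sum_comm]
  refine Finset.sum_congr rfl fun i _ => ?_
  rw [Finset.sum_comm]
  simp_rw [key]
  simp

lemma sum_prod_eq_one {ι α : Type*} [Fintype ι] [DecidableEq ι] [Fintype α] (p : ι → α → ℝ)
    (hp : ∀ i, ∑ a, p i a = 1) : ∑ y : ι → α, ∏ i, p i (y i) = 1 := by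
  rw [← Fintype.piFinset_univ, ← Finset.prod_univ_sum (fun _ => (univ : Finset α)) p]
  simp [hp]

/-- Soft covering: the output of `V` under `Q` is approximated in `L¹` by an `M`-type input. -/
lemma exists_codebook_approx {α β : Type*} [Fintype α] [Fintype β] (Q : α → ℝ) (hQ : IsPMF Q)
    (V : α → β → ℝ) (S : β → ℝ) (A : ℝ) (hV : ∀ x y, 0 ≤ V x y) (hV1 : ∀ x, ∑ y, V x y ≤ 1)
    (hS : ∀ y, 0 ≤ S y) (hA : 0 ≤ A) (hVS : ∀ x y, V x y ≤ A * S y) (M : ℕ) (hM : 0 < M) :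
    ∃ u : Fin M → α, (∑ y, |∑ x, Q x * V x y - (M : ℝ)⁻¹ * ∑ i, V (u i) y|) ^ 2
      ≤ (∑ y, S y) * (A / M) := by
  have hM' : (0 : ℝ) < M := by exact_mod_cast hM
  set q : β → ℝ := fun y => ∑ x, Q x * V x y with hq
  set a : (Fin M → α) → β → ℝ := fun u y => q y - (M : ℝ)⁻¹ * ∑ i, V (u i) y with ha
  have hmom : ∀ y, ∑ u : Fin M → α, (∏ i, Q (u i)) * (a u y) ^ 2
      ≤ (M : ℝ)⁻¹ * ∑ x, Q x * V x y ^ 2 := by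
    intro y
    have h := sum_prod_mul_sum_sq (fun (_ : Fin M) => Q) (fun _ x => q y - V x y)
      (fun _ => hQ.2) (fun _ => by
        simp_rw [mul_sub, Finset.sum_sub_distrib, ← Finset.sum_mul, hQ.2, hq]; simp)
    have hpt : ∀ u : Fin M → α, (∏ i, Q (u i)) * (a u y) ^ 2 =
        ((M : ℝ)⁻¹) ^ 2 * ((∏ i, Q (u i)) * (∑ i : Fin M, (q y - V (u i) y)) ^ 2) := by
      intro u
      simp only [ha, Finset.sum_sub_distrib, Finset.sum_const, Finset.card_univ, Fintype.card_fin,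
        nsmul_eq_mul]
      field_simp
    have hvar : ∑ x, Q x * (q y - V x y) ^ 2 ≤ ∑ x, Q x * V x y ^ 2 := by
      have : ∑ x, Q x * (q y - V x y) ^ 2 = ∑ x, Q x * V x y ^ 2 - q y ^ 2 := by
        have e : ∀ x, Q x * (q y - V x y) ^ 2 =
          q y ^ 2 * Q x - 2 * q y * (Q x * V x y) + Q x * V x y ^ 2 := fun x => by ring
        simp_rw [e, Finset.sum_add_distrib, Finset.sum_sub_distrib, ← Finset.mul_sum, hQ.2]
        change q y ^ 2 * 1 - 2 * q y * q y + _ = _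
        ring
      rw [this]
      nlinarith [sq_nonneg (q y)]
    simp_rw [hpt]
    rw [← Finset.mul_sum, h]
    simp only [Finset.sum_const, Finset.card_univ, Fintype.card_fin, nsmul_eq_mul]
    calc ((M : ℝ)⁻¹) ^ 2 * (M * ∑ x, Q x * (q y - V x y) ^ 2)
        = (M : ℝ)⁻¹ * ∑ x, Q x * (q y - V x y) ^ 2 := by field_simp
      _ ≤ _ := by gcongr
  have hmean : ∑ u : Fin M → α, (∏ i, Q (u i)) * (∑ y, (a u y) ^ 2 / S y) ≤ A / M := by
    calc ∑ u : Fin M → α, (∏ i, Q (u i)) * (∑ y, (a u y) ^ 2 / S y)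
        = ∑ y, (∑ u : Fin M → α, (∏ i, Q (u i)) * (a u y) ^ 2) / S y := by
          simp_rw [Finset.mul_sum, Finset.sum_div]
          rw [Finset.sum_comm]
          simp_rw [mul_div_assoc]
      _ ≤ ∑ y, ((M : ℝ)⁻¹ * ∑ x, Q x * V x y ^ 2) / S y :=
          Finset.sum_le_sum fun y _ => div_le_div_of_nonneg_right (hmom y) (hS y)
      _ ≤ ∑ y, (M : ℝ)⁻¹ * ∑ x, Q x * (A * V x y) := by
          refine Finset.sum_le_sum fun y _ => ?_
          rw [mul_div_assoc, Finset.sum_div]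
          gcongr with x _
          rw [mul_div_assoc]
          refine mul_le_mul_of_nonneg_left ?_ (hQ.1 x)
          rcases (hS y).eq_or_lt with h0 | h0
          · rw [← h0]; simpa using mul_nonneg hA (hV x y)
          · rw [div_le_iff₀ h0]
            nlinarith [hVS x y, hV x y]
      _ = (M : ℝ)⁻¹ * (A * ∑ x, Q x * ∑ y, V x y) := by
          rw [← Finset.mul_sum, Finset.sum_comm]
          congr 1
          rw [Finset.mul_sum]
          refine Finset.sum_congr rfl fun x _ => ?_
          simp_rw [Finset.mul_sum]
          exact Finset.sum_congr rfl fun y _ => by ring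
      _ ≤ (M : ℝ)⁻¹ * (A * ∑ x, Q x * 1) := by
          gcongr with x _
          · exact hQ.1 x
          · exact hV1 x
      _ = A / M := by simp [hQ.2]; field_simp
  have hex : ∃ u : Fin M → α, ∑ y, (a u y) ^ 2 / S y ≤ A / M := by
    by_contra! hcon
    have hone := sum_prod_eq_one (fun (_ : Fin M) => Q) (fun _ => hQ.2)
    have hnn : ∀ u : Fin M → α, 0 ≤ ∏ i, Q (u i) := fun u => Finset.prod_nonneg fun i _ => hQ.1 _
    obtain ⟨u₀, -, hu₀⟩ : ∃ u₀ ∈ (univ : Finset (Fin M → α)), 0 < ∏ i, Q (u₀ i) := by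
      apply Finset.exists_lt_of_sum_lt
      rw [hone]; simp
    have : ∑ u : Fin M → α, (∏ i, Q (u i)) * (A / M)
        < ∑ u : Fin M → α, (∏ i, Q (u i)) * (∑ y, (a u y) ^ 2 / S y) :=
      Finset.sum_lt_sum (fun u _ => mul_le_mul_of_nonneg_left (hcon u).le (hnn u))
        ⟨u₀, mem_univ _, mul_lt_mul_of_pos_left (hcon u₀) hu₀⟩
    rw [← Finset.sum_mul, hone] at this
    linarith
  obtain ⟨u, hu⟩ := hex
  refine ⟨u, ?_⟩
  have hcs := Finset.sum_sq_le_sum_mul_sum_of_sq_le_mul univ (r := fun y => |a u y|) (f := S)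
    (g := fun y => (a u y) ^ 2 / S y) (fun y _ => hS y)
    (fun y _ => div_nonneg (sq_nonneg _) (hS y)) (fun y _ => by
      rcases (hS y).eq_or_lt with h0 | h0
      · have hz : ∀ x, V x y = 0 := fun x =>
          le_antisymm (by simpa [← h0] using hVS x y) (hV x y)
        simp [ha, hq, hz]
      · rw [sq_abs]; exact (mul_div_cancel₀ _ h0.ne').ge)
  exact hcs.trans (mul_le_mul_of_nonneg_left hu (Finset.sum_nonneg fun y _ => hS y))

/-- One-shot identification converse: the average input mass outside the set of inputs whose
information density is typically small is at least `1 - l1 - l2 - 4 δ`. -/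
lemma id_converse_one_shot {α β : Type*} [Fintype α] [Fintype β] [DecidableEq β]
    (K : α → β → ℝ) (hK : IsChannel K) (G : Finset α) (S : β → ℝ) (hS : ∀ y, 0 ≤ S y)
    (A δ : ℝ) (hA : 0 ≤ A) (hδ : 0 ≤ δ)
    (hbad : ∀ x, x ∉ G → ∑ y, (if A * S y < K x y then K x y else 0) ≤ δ)
    (M : ℕ) (hM : 0 < M) (hMA : (∑ y, S y) * (A / M) ≤ δ ^ 2)
    (k : ℕ) (hk : (Fintype.card α : ℝ) ^ M ≤ δ * k)
    (Q : Fin k → α → ℝ) (hQ : ∀ m, IsPMF (Q m)) (D : Fin k → Finset β) (l1 l2 : ℝ)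
    (hl1 : 0 ≤ l1) (hl2 : 0 ≤ l2)
    (h1 : ∀ m, ∑ x, Q m x * ∑ y ∈ (D m)ᶜ, K x y ≤ l1)
    (h2 : ∀ m m', m ≠ m' → ∑ x, Q m x * ∑ y ∈ D m', K x y ≤ l2) :
    k * (1 - l1 - l2 - 4 * δ) ≤ ∑ m, ∑ x ∈ G, Q m x := by
  set V : α → β → ℝ := fun x y => if x ∈ G then 0 else if A * S y < K x y then 0 else K x y with hVdef
  have hV0 : ∀ x y, 0 ≤ V x y := by
    intro x y; simp only [hVdef]; split_ifs <;> simp [hK.1]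
  have hVK : ∀ x y, V x y ≤ K x y := by
    intro x y; simp only [hVdef]; split_ifs <;> simp [hK.1]
  have hVS : ∀ x y, V x y ≤ A * S y := by
    intro x y; simp only [hVdef]
    split_ifs with h h'
    · exact mul_nonneg hA (hS y)
    · exact mul_nonneg hA (hS y)
    · exact not_lt.mp h'
  have hV1 : ∀ x, ∑ y, V x y ≤ 1 := fun x =>
    (Finset.sum_le_sum fun y _ => hVK x y).trans (hK.2 x).le
  have hKV : ∀ x, ∀ E : Finset β, ∑ y ∈ E, K x y ≤ ∑ y ∈ E, V x y + ((if x ∈ G then 1 else 0) + δ) := by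
    intro x E
    suffices h : ∑ y ∈ E, (K x y - V x y) ≤ (if x ∈ G then 1 else 0) + δ by
      rw [Finset.sum_sub_distrib] at h; linarith
    refine (Finset.sum_le_univ_sum_of_nonneg fun y => sub_nonneg.2 (hVK x y)).trans ?_
    by_cases hx : x ∈ G
    · simp [hVdef, hx, hK.2, hδ]
    · simp only [hx, if_false, zero_add]
      refine le_trans (Finset.sum_le_sum fun y _ => ?_) (hbad x hx)
      simp only [hVdef, hx, if_false]
      split_ifs <;> simp
  choose u hu using fun m => exists_codebook_approx (Q m) (hQ m) V S A hV0 hV1 hS hA hVS M hM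
  have hu' : ∀ m, ∑ y, |∑ x, Q m x * V x y - (M : ℝ)⁻¹ * ∑ i, V (u m i) y| ≤ δ := fun m =>
    abs_le_of_sq_le_sq' ((hu m).trans hMA) hδ |>.2
  have hgood : ∀ m m', m ≠ m' → u m = u m' → 1 - l1 - l2 - 3 * δ ≤ ∑ x ∈ G, Q m x := by
    intro m m' hne huu
    have hA1 : 1 - l1 ≤ ∑ x, Q m x * ∑ y ∈ D m, K x y := by
      have : ∑ x, Q m x * ∑ y ∈ D m, K x y + ∑ x, Q m x * ∑ y ∈ (D m)ᶜ, K x y = 1 := by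
        rw [← Finset.sum_add_distrib]
        simp_rw [← mul_add, Finset.sum_add_sum_compl, hK.2, mul_one, (hQ m).2]
      linarith [h1 m]
    have hA2 : ∑ x, Q m x * ∑ y ∈ D m, K x y
        ≤ ∑ x, Q m x * ∑ y ∈ D m, V x y + (∑ x ∈ G, Q m x + δ) := by
      calc ∑ x, Q m x * ∑ y ∈ D m, K x y
          ≤ ∑ x, Q m x * (∑ y ∈ D m, V x y + ((if x ∈ G then 1 else 0) + δ)) :=
            Finset.sum_le_sum fun x _ => mul_le_mul_of_nonneg_left (hKV x _) ((hQ m).1 x)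
        _ = _ := by
            simp_rw [mul_add, Finset.sum_add_distrib, ← Finset.sum_mul, (hQ m).2]
            simp [Finset.sum_ite_mem]
    have hA3 : ∑ x, Q m' x * ∑ y ∈ D m, V x y ≤ l2 :=
      (Finset.sum_le_sum fun x _ => mul_le_mul_of_nonneg_left
        (Finset.sum_le_sum fun y _ => hVK x y) ((hQ m').1 x)).trans (h2 m' m hne.symm)
    have hA4 : ∑ x, Q m x * ∑ y ∈ D m, V x y ≤ ∑ x, Q m' x * ∑ y ∈ D m, V x y + 2 * δ := by
      have hsw : ∀ m'', ∑ x, Q m'' x * ∑ y ∈ D m, V x y = ∑ y ∈ D m, ∑ x, Q m'' x * V x y := by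
        intro m''
        simp_rw [Finset.mul_sum]
        exact Finset.sum_comm
      rw [hsw, hsw, ← sub_le_iff_le_add', ← Finset.sum_sub_distrib]
      calc ∑ y ∈ D m, (∑ x, Q m x * V x y - ∑ x, Q m' x * V x y)
          ≤ ∑ y ∈ D m, (|∑ x, Q m x * V x y - (M : ℝ)⁻¹ * ∑ i, V (u m i) y| +
              |∑ x, Q m' x * V x y - (M : ℝ)⁻¹ * ∑ i, V (u m' i) y|) := by
            refine Finset.sum_le_sum fun y _ => ?_
            rw [huu]
            linarith [le_abs_self (∑ x, Q m x * V x y - (M : ℝ)⁻¹ * ∑ i, V (u m' i) y),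
              neg_abs_le (∑ x, Q m' x * V x y - (M : ℝ)⁻¹ * ∑ i, V (u m' i) y)]
        _ ≤ ∑ y, (|∑ x, Q m x * V x y - (M : ℝ)⁻¹ * ∑ i, V (u m i) y| +
              |∑ x, Q m' x * V x y - (M : ℝ)⁻¹ * ∑ i, V (u m' i) y|) :=
            Finset.sum_le_univ_sum_of_nonneg fun y => by positivity
        _ ≤ 2 * δ := by
            rw [Finset.sum_add_distrib]; linarith [hu' m, hu' m']
    linarith
  set E : Finset (Fin k) := univ.filter fun m => ∑ x ∈ G, Q m x < 1 - l1 - l2 - 3 * δ with hE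
  have hEcard : (E.card : ℝ) ≤ δ * k := by
    refine le_trans ?_ hk
    have : E.card ≤ (univ : Finset (Fin M → α)).card := by
      refine Finset.card_le_card_of_injOn u (fun _ _ => by simp) ?_
      intro m hm m' _ huu
      by_contra hne
      have := hgood m m' hne huu
      simp only [hE, Finset.coe_filter, Finset.mem_univ, true_and, Set.mem_ofPred_eq] at hm
      linarith
    rw [Finset.card_univ, Fintype.card_fun, Fintype.card_fin] at this
    exact_mod_cast this
  have hpt : ∀ m, (1 - l1 - l2 - 3 * δ) - (if m ∈ E then 1 else 0) ≤ ∑ x ∈ G, Q m x := by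
    intro m
    have h0 : 0 ≤ ∑ x ∈ G, Q m x := Finset.sum_nonneg fun x _ => (hQ m).1 x
    split_ifs with hm
    · linarith
    · simp only [hE, Finset.mem_filter, Finset.mem_univ, true_and, not_lt] at hm
      linarith
  calc k * (1 - l1 - l2 - 4 * δ) ≤ k * (1 - l1 - l2 - 3 * δ) - E.card := by linarith
    _ = ∑ m : Fin k, ((1 - l1 - l2 - 3 * δ) - (if m ∈ E then 1 else 0)) := by
        simp only [Finset.sum_sub_distrib, Finset.sum_const, Finset.card_univ, Fintype.card_fin,
          nsmul_eq_mul, Finset.sum_ite_mem, Finset.univ_inter]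
        ring
    _ ≤ _ := Finset.sum_le_sum fun m _ => hpt m

/-- The output distribution of `W` under the input `P`. -/
def outDist {X Y : Type*} [Fintype X] (P : X → ℝ) (W : X → Y → ℝ) (y : Y) : ℝ :=
  ∑ x, P x * W x y

/-- The empirical distribution (type) of a sequence. -/
def empType {X : Type*} {n : ℕ} (x : Fin n → X) (a : X) : ℝ :=
  (#{i | x i = a} : ℝ) / n

lemma sum_empType_mul {X : Type*} [Fintype X] {n : ℕ} (hn : 0 < n) (x : Fin n → X) (h : X → ℝ) :
    ∑ i, h (x i) = n * ∑ a, empType x a * h a := by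
  have hn' : (n : ℝ) ≠ 0 := by exact_mod_cast hn.ne'
  rw [Finset.mul_sum, ← Finset.sum_fiberwise univ x (fun i => h (x i))]
  refine Finset.sum_congr rfl fun a _ => ?_
  rw [Finset.sum_congr rfl (g := fun _ => h a) (fun i hi => by rw [(Finset.mem_filter.1 hi).2])]
  simp only [Finset.sum_const, nsmul_eq_mul, empType]
  field_simp

lemma isPMF_empType {X : Type*} [Fintype X] {n : ℕ} (hn : 0 < n) (x : Fin n → X) :
    IsPMF (empType x) := by
  have hn' : (n : ℝ) ≠ 0 := by exact_mod_cast hn.ne'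
  refine ⟨fun a => by unfold empType; positivity, ?_⟩
  have := sum_empType_mul hn x (fun _ => 1)
  simp only [Finset.sum_const, Finset.card_univ, Fintype.card_fin, nsmul_eq_mul, mul_one] at this
  exact (mul_left_cancel₀ hn' (by rw [← this, mul_one]))

lemma empType_pos {X : Type*} {n : ℕ} (hn : 0 < n) (x : Fin n → X) (i : Fin n) :
    0 < empType x (x i) := by
  have : 0 < #{j | x j = x i} := Finset.card_pos.2 ⟨i, by simp⟩
  unfold empType
  positivity

lemma card_image_empType_le (X : Type*) [Fintype X] (n : ℕ) :
    #((univ : Finset (Fin n → X)).image empType) ≤ (n + 1) ^ Fintype.card X := by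
  have hsub : (univ : Finset (Fin n → X)).image empType ⊆
      (univ : Finset (X → Fin (n + 1))).image (fun c a => ((c a : ℕ) : ℝ) / n) := by
    intro P hP
    obtain ⟨x, -, rfl⟩ := Finset.mem_image.1 hP
    refine Finset.mem_image.2 ⟨fun a => ⟨#{i | x i = a}, ?_⟩, mem_univ _, rfl⟩
    have := Finset.card_le_univ ({i | x i = a} : Finset (Fin n))
    rw [Fintype.card_fin] at this
    omega
  refine (Finset.card_le_card hsub).trans (Finset.card_image_le.trans ?_)
  rw [Finset.card_univ, Fintype.card_fun, Fintype.card_fin]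

lemma mutInf_eq_sum {X Y : Type*} [Fintype X] [Fintype Y] (P : X → ℝ) (W : X → Y → ℝ) :
    mutInf P W = ∑ x, P x * ∑ y, W x y * Real.log (W x y / outDist P W y) := by
  unfold mutInf outDist
  refine Finset.sum_congr rfl fun x _ => ?_
  rw [Finset.mul_sum]
  refine Finset.sum_congr rfl fun y _ => ?_
  split_ifs with h
  · rw [← mul_assoc, h, zero_mul]
  · rw [mul_assoc]

lemma outDist_nonneg {X Y : Type*} [Fintype X] [Fintype Y] {P : X → ℝ} {W : X → Y → ℝ}
    (hP : IsPMF P) (hW : IsChannel W) (y : Y) : 0 ≤ outDist P W y :=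
  Finset.sum_nonneg fun x _ => mul_nonneg (hP.1 x) (hW.1 x y)

lemma sum_outDist {X Y : Type*} [Fintype X] [Fintype Y] {P : X → ℝ} {W : X → Y → ℝ}
    (hP : IsPMF P) (hW : IsChannel W) : ∑ y, outDist P W y = 1 := by
  unfold outDist
  rw [Finset.sum_comm]
  simp_rw [← Finset.mul_sum, hW.2, mul_one, hP.2]

lemma mul_le_outDist {X Y : Type*} [Fintype X] [Fintype Y] {P : X → ℝ} {W : X → Y → ℝ}
    (hP : IsPMF P) (hW : IsChannel W) (x : X) (y : Y) : P x * W x y ≤ outDist P W y :=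
  Finset.single_le_sum (f := fun x => P x * W x y)
    (fun x _ => mul_nonneg (hP.1 x) (hW.1 x y)) (mem_univ x)

lemma mutInf_nonneg {X Y : Type*} [Fintype X] [Fintype Y] {P : X → ℝ} {W : X → Y → ℝ}
    (hP : IsPMF P) (hW : IsChannel W) : 0 ≤ mutInf P W := by
  have hpt : ∀ x y, P x * (W x y - outDist P W y) ≤
      P x * (W x y * Real.log (W x y / outDist P W y)) := by
    intro x y
    have hPx := hP.1 x
    have hWxy := hW.1 x y
    have hq := outDist_nonneg hP hW y
    have hle := mul_le_outDist hP hW x y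
    rcases hPx.eq_or_lt with h | h
    · simp [← h]
    refine mul_le_mul_of_nonneg_left ?_ hPx
    rcases hWxy.eq_or_lt with h' | h'
    · rw [← h']; simpa using hq
    have hq' : 0 < outDist P W y := (mul_pos h h').trans_le hle
    have hlog := Real.one_sub_inv_le_log_of_pos (div_pos h' hq')
    calc W x y - outDist P W y = W x y * (1 - (W x y / outDist P W y)⁻¹) := by
          field_simp
      _ ≤ _ := mul_le_mul_of_nonneg_left hlog hWxy
  rw [mutInf_eq_sum]
  simp_rw [Finset.mul_sum]
  refine le_trans (le_of_eq ?_) (Finset.sum_le_sum fun x _ => Finset.sum_le_sum fun y _ => hpt x y)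
  simp_rw [← Finset.mul_sum, Finset.sum_sub_distrib, hW.2, sum_outDist hP hW]
  simp

lemma mul_log_sq_le {t : ℝ} (h0 : 0 < t) (h1 : t ≤ 1) : t * Real.log t ^ 2 ≤ 4 := by
  have h := (Real.abs_log_mul_self_rpow_lt t (1 / 2) h0 h1 (by norm_num)).le
  rw [← Real.sqrt_eq_rpow] at h
  have h2 : (Real.log t * √t) ^ 2 ≤ (1 / (1 / 2)) ^ 2 :=
    sq_le_sq' (by linarith [neg_abs_le (Real.log t * √t)]) ((le_abs_self _).trans h)
  rw [mul_pow, Real.sq_sqrt h0.le] at h2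
  linarith

lemma mul_mul_log_div_sq_le {p w q : ℝ} (hp : 0 ≤ p) (hp1 : p ≤ 1) (hw : 0 ≤ w) (hw1 : w ≤ 1)
    (hpq : p * w ≤ q) (hq1 : q ≤ 1) : p * (w * Real.log (w / q) ^ 2) ≤ 8 := by
  rcases hp.eq_or_lt with h | hp0
  · rw [← h]; norm_num
  rcases hw.eq_or_lt with h | hw0
  · rw [← h]; norm_num
  have hq0 : 0 < q := (mul_pos hp0 hw0).trans_le hpq
  have hup : Real.log (w / q) ≤ -Real.log p := by
    rw [← Real.log_inv]
    refine Real.log_le_log (by positivity) ?_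
    rw [div_le_iff₀ hq0, inv_mul_eq_div, le_div_iff₀ hp0]
    linarith
  have hlow : Real.log w ≤ Real.log (w / q) :=
    Real.log_le_log hw0 ((le_div_iff₀ hq0).2 (by nlinarith))
  have hsq : Real.log (w / q) ^ 2 ≤ Real.log p ^ 2 + Real.log w ^ 2 := by
    rcases le_total 0 (Real.log (w / q)) with h | h
    · nlinarith [sq_nonneg (Real.log w)]
    · nlinarith [sq_nonneg (Real.log p)]
  have hP := mul_log_sq_le hp0 hp1
  have hWl := mul_log_sq_le hw0 hw1
  calc p * (w * Real.log (w / q) ^ 2) ≤ p * (w * (Real.log p ^ 2 + Real.log w ^ 2)) := by gcongr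
    _ = w * (p * Real.log p ^ 2) + p * (w * Real.log w ^ 2) := by ring
    _ ≤ 1 * 4 + 1 * 4 := by gcongr
    _ = 8 := by norm_num

lemma isChannel_Wn {X Y : Type*} [Fintype Y] {W : X → Y → ℝ} (hW : IsChannel W) (n : ℕ) :
    IsChannel (Wn W n) :=
  ⟨fun _ _ => Finset.prod_nonneg fun _ _ => hW.1 _ _,
    fun x => sum_prod_eq_one (fun i => W (x i)) fun _ => hW.2 _⟩

/-- Given an input of type `P`, the information density rarely exceeds `n (I(P,W) + γ)`. -/
lemma sum_Wn_of_large_density_le {X Y : Type*} [Fintype X] [Fintype Y] {W : X → Y → ℝ}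
    (hW : IsChannel W) {n : ℕ} (hn : 0 < n) (x : Fin n → X) {γ : ℝ} (hγ : 0 < γ) :
    ∑ y, (if Real.exp (n * (mutInf (empType x) W + γ)) * ∏ i, outDist (empType x) W (y i)
        < Wn W n x y then Wn W n x y else 0)
      ≤ 8 * Fintype.card X * Fintype.card Y / (n * γ ^ 2) := by
  have hn' : (0 : ℝ) < n := by exact_mod_cast hn
  set P := empType x
  have hP : IsPMF P := isPMF_empType hn x
  have hWn := isChannel_Wn hW n
  set f : X → Y → ℝ := fun a b => Real.log (W a b / outDist P W b)
  set μ : X → ℝ := fun a => ∑ b, W a b * f a b with hμ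
  have hP1 : ∀ a, P a ≤ 1 := fun a =>
    (Finset.single_le_sum (fun a _ => hP.1 a) (mem_univ a)).trans hP.2.le
  have hW1 : ∀ a b, W a b ≤ 1 := fun a b =>
    (Finset.single_le_sum (fun b _ => hW.1 a b) (mem_univ b)).trans (hW.2 a).le
  have hq1 : ∀ b, outDist P W b ≤ 1 := fun b =>
    (Finset.single_le_sum (fun b _ => outDist_nonneg hP hW b) (mem_univ b)).trans
      (sum_outDist hP hW).le
  have hmean : ∑ i, μ (x i) = n * mutInf P W := by
    rw [sum_empType_mul hn, mutInf_eq_sum]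
  have hmom := sum_prod_mul_sum_sq (fun i => W (x i)) (fun i b => f (x i) b - μ (x i))
    (fun i => hW.2 _) (fun i => by
      simp_rw [mul_sub, Finset.sum_sub_distrib, ← Finset.sum_mul, hW.2, hμ]; simp)
  have hvar : ∑ i, ∑ b, W (x i) b * (f (x i) b - μ (x i)) ^ 2
      ≤ n * (8 * Fintype.card X * Fintype.card Y) := by
    have h1 : ∀ a, ∑ b, W a b * (f a b - μ a) ^ 2 ≤ ∑ b, W a b * f a b ^ 2 := by
      intro a
      have e : ∀ b, W a b * (f a b - μ a) ^ 2 =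
          W a b * f a b ^ 2 - 2 * μ a * (W a b * f a b) + μ a ^ 2 * W a b := fun b => by ring
      have hμa : ∑ b, W a b * f a b = μ a := rfl
      simp_rw [e, Finset.sum_add_distrib, Finset.sum_sub_distrib, ← Finset.mul_sum, hW.2, hμa]
      nlinarith [sq_nonneg (μ a)]
    calc ∑ i, ∑ b, W (x i) b * (f (x i) b - μ (x i)) ^ 2
        ≤ ∑ i, ∑ b, W (x i) b * f (x i) b ^ 2 := Finset.sum_le_sum fun i _ => h1 _
      _ = n * ∑ a, P a * ∑ b, W a b * f a b ^ 2 :=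
          sum_empType_mul hn x (fun a => ∑ b, W a b * f a b ^ 2)
      _ ≤ n * ∑ _a : X, ∑ _b : Y, (8 : ℝ) := by
          simp_rw [Finset.mul_sum (s := (univ : Finset Y))]
          gcongr with a _ b _
          exact mul_mul_log_div_sq_le (hP.1 a) (hP1 a) (hW.1 a b) (hW1 a b)
            (mul_le_outDist hP hW a b) (hq1 b)
      _ = _ := by
          simp only [Finset.sum_const, Finset.card_univ, nsmul_eq_mul]
          ring
  have hpt : ∀ y, (if Real.exp (n * (mutInf P W + γ)) * ∏ i, outDist P W (y i)
        < Wn W n x y then Wn W n x y else 0) * (n * γ) ^ 2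
      ≤ (∏ i, W (x i) (y i)) * (∑ i, (f (x i) (y i) - μ (x i))) ^ 2 := by
    intro y
    have hnn : 0 ≤ ∏ i, W (x i) (y i) := hWn.1 x y
    split_ifs with hlt
    · refine mul_le_mul_of_nonneg_left ?_ hnn
      have hq0 : ∀ i, 0 ≤ outDist P W (y i) := fun i => outDist_nonneg hP hW _
      have hpos : 0 < Wn W n x y :=
        (mul_nonneg (Real.exp_pos _).le (Finset.prod_nonneg fun i _ => hq0 i)).trans_lt hlt
      have hWpos : ∀ i, 0 < W (x i) (y i) := fun i =>
        (hW.1 _ _).lt_of_ne fun h => hpos.ne' (Finset.prod_eq_zero (mem_univ i) h.symm)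
      have hqpos : ∀ i, 0 < outDist P W (y i) := fun i =>
        (mul_pos (empType_pos hn x i) (hWpos i)).trans_le (mul_le_outDist hP hW _ _)
      have hqprod : 0 < ∏ i, outDist P W (y i) := Finset.prod_pos fun i _ => hqpos i
      have hlog := Real.log_lt_log (mul_pos (Real.exp_pos _) hqprod) hlt
      rw [Real.log_mul (Real.exp_pos _).ne' hqprod.ne', Real.log_exp, Wn,
        Real.log_prod fun i _ => (hWpos i).ne', Real.log_prod fun i _ => (hqpos i).ne'] at hlog
      have hfs : ∑ i, f (x i) (y i) =
          ∑ i, Real.log (W (x i) (y i)) - ∑ i, Real.log (outDist P W (y i)) := by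
        rw [← Finset.sum_sub_distrib]
        exact Finset.sum_congr rfl fun i _ => Real.log_div (hWpos i).ne' (hqpos i).ne'
      have : n * γ ≤ ∑ i, (f (x i) (y i) - μ (x i)) := by
        rw [Finset.sum_sub_distrib, hmean, hfs]
        linarith
      exact pow_le_pow_left₀ (by positivity) this 2
    · rw [zero_mul]; positivity
  have htot := (Finset.sum_le_sum fun y (_ : y ∈ univ) => hpt y).trans (hmom.le.trans hvar)
  rw [← Finset.sum_mul, ← le_div_iff₀ (by positivity)] at htot
  refine htot.trans (le_of_eq ?_)
  field_simp

/-- The doubly exponential message set eventually outgrows the number of codebooks. -/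
lemma eventually_card_pow_le (a c : ℕ) (hc : 0 < c) (R ε δ : ℝ) (hR : 0 < R) (hε : 0 < ε)
    (hδ : 0 < δ) : ∀ᶠ n : ℕ in Filter.atTop, ∃ M : ℕ, 0 < M ∧
      ((n : ℝ) + 1) ^ a * (Real.exp (n * (R - ε)) / M) ≤ δ ^ 2 ∧
      ((c : ℝ) ^ n) ^ M ≤ δ * Real.exp (Real.exp (n * R)) := by
  set L := Real.log c
  have hL0 : 0 ≤ L := Real.log_natCast_nonneg c
  have hpoly : ∀ (b : ℕ) (r : ℝ), 0 < r →
      Filter.Tendsto (fun n : ℕ => (n : ℝ) ^ b * Real.exp (-(r * n))) Filter.atTop (nhds 0) := by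
    intro b r hr
    have h := (Real.tendsto_pow_mul_exp_neg_atTop_nhds_zero b).comp
      (tendsto_natCast_atTop_atTop.const_mul_atTop hr)
    have h' := h.const_mul ((r ^ b)⁻¹)
    rw [mul_zero] at h'
    refine h'.congr fun n => ?_
    simp only [Function.comp, mul_pow]
    field_simp
  have hlim : Filter.Tendsto (fun n : ℕ =>
      L * 2 ^ a / δ ^ 2 * ((n : ℝ) ^ (a + 1) * Real.exp (-(ε * n))) +
        L * ((n : ℝ) ^ 1 * Real.exp (-(R * n))) -
        Real.log δ * ((n : ℝ) ^ 0 * Real.exp (-(R * n)))) Filter.atTop (nhds 0) := by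
    have := (((hpoly (a + 1) ε hε).const_mul (L * 2 ^ a / δ ^ 2)).add
      ((hpoly 1 R hR).const_mul L)).sub ((hpoly 0 R hR).const_mul (Real.log δ))
    simpa using this
  filter_upwards [hlim.eventually (gt_mem_nhds one_pos), Filter.eventually_ge_atTop 1] with n hn hn1
  have hn1' : (1 : ℝ) ≤ n := by exact_mod_cast hn1
  set B := ((n : ℝ) + 1) ^ a * Real.exp (n * (R - ε)) / δ ^ 2 with hB
  have hB0 : 0 < B := by positivity
  refine ⟨⌈B⌉₊, Nat.ceil_pos.2 hB0, ?_, ?_⟩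
  · have hM : B ≤ (⌈B⌉₊ : ℝ) := Nat.le_ceil B
    rw [← mul_div_assoc, div_le_iff₀ (hB0.trans_le hM)]
    have : ((n : ℝ) + 1) ^ a * Real.exp (n * (R - ε)) = δ ^ 2 * B := by rw [hB]; field_simp
    rw [this]
    gcongr
  · have hM : (⌈B⌉₊ : ℝ) ≤ B + 1 := (Nat.ceil_lt_add_one hB0.le).le
    have hc' : (0 : ℝ) < c := by exact_mod_cast hc
    rw [← Real.exp_log hc', ← Real.exp_nat_mul, ← Real.exp_nat_mul, ← Real.exp_log hδ,
      ← Real.exp_add, Real.exp_le_exp]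
    have hB2 : B ≤ 2 ^ a / δ ^ 2 * (n : ℝ) ^ a * Real.exp (n * (R - ε)) := by
      have : ((n : ℝ) + 1) ^ a ≤ (2 * n) ^ a := by gcongr; linarith
      calc B ≤ (2 * n) ^ a * Real.exp (n * (R - ε)) / δ ^ 2 := by rw [hB]; gcongr
        _ = _ := by rw [mul_pow]; ring
    have hE : (L * 2 ^ a / δ ^ 2 * ((n : ℝ) ^ (a + 1) * Real.exp (-(ε * n))) +
        L * ((n : ℝ) ^ 1 * Real.exp (-(R * n))) -
        Real.log δ * ((n : ℝ) ^ 0 * Real.exp (-(R * n)))) * Real.exp (n * R) =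
        n * L * (2 ^ a / δ ^ 2 * (n : ℝ) ^ a * Real.exp (n * (R - ε)) + 1) - Real.log δ := by
      have e1 : Real.exp (n * (R - ε)) = Real.exp (-(ε * n)) * Real.exp (n * R) := by
        rw [← Real.exp_add]; ring_nf
      have e2 : Real.exp (-(R * n)) * Real.exp (n * R) = 1 := by
        rw [← Real.exp_add]; ring_nf; exact Real.exp_zero
      rw [e1]
      linear_combination (L * n - Real.log δ) * e2
    have hlt := mul_le_mul_of_nonneg_right hn.le (Real.exp_pos (n * R)).le
    rw [hE, one_mul] at hlt
    calc (⌈B⌉₊ : ℝ) * (n * L)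
        ≤ (2 ^ a / δ ^ 2 * (n : ℝ) ^ a * Real.exp (n * (R - ε)) + 1) * (n * L) := by
          gcongr; linarith
      _ ≤ _ := by linarith

/-- Refined strong converse for one receiver: the average input of an identification code puts
mass at least `1 - l1 - l2 - 4 δ` on sequences whose type has mutual information above `R - ε`. -/
lemma eventually_mass_good_types {X Y : Type*} [Fintype X] [Fintype Y] [Nonempty X]
    {W : X → Y → ℝ} (hW : IsChannel W) (R ε δ l1 l2 : ℝ) (hR : 0 ≤ R) (hε : 0 < ε) (hδ : 0 < δ)
    (hl1 : 0 ≤ l1) (hl2 : 0 ≤ l2) :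
    ∀ᶠ n : ℕ in Filter.atTop, ∀ k : ℕ, k = Nat.ceil (Real.exp (Real.exp (n * R))) →
      ∀ (Q : Fin k → (Fin n → X) → ℝ) (D : Fin k → Finset (Fin n → Y)),
        IsIDCode n W Q D l1 l2 →
        k * (1 - l1 - l2 - 4 * δ) ≤
          ∑ m, ∑ x with R < mutInf (empType x) W + ε, Q m x := by
  rcases hR.eq_or_lt with rfl | hR0
  · filter_upwards [Filter.eventually_ge_atTop 1] with n hn k _ Q D hQD
    rw [Finset.filter_true_of_mem fun x _ => by
      linarith [mutInf_nonneg (isPMF_empType (Nat.lt_of_lt_of_le one_pos hn) x) hW]]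
    simp_rw [(hQD.1 _).2]
    simp only [Finset.sum_const, Finset.card_univ, Fintype.card_fin, nsmul_eq_mul]
    exact mul_le_mul_of_nonneg_left (by linarith) (Nat.cast_nonneg k)
  have hCheb : Filter.Tendsto (fun n : ℕ =>
      (8 * Fintype.card X * Fintype.card Y / (ε / 2) ^ 2 : ℝ) / n) Filter.atTop (nhds 0) :=
    tendsto_const_div_atTop_nhds_zero_nat _
  filter_upwards [eventually_card_pow_le (Fintype.card X) (Fintype.card X) Fintype.card_pos R
    (ε / 2) δ hR0 (half_pos hε) hδ, hCheb.eventually (gt_mem_nhds hδ),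
    Filter.eventually_ge_atTop 1] with n ⟨M, hM, hM1, hM2⟩ hn2 hn k hk Q D hQD
  have hn0 : 0 < n := hn
  set T := (univ : Finset (Fin n → X)).image empType
  set S : (Fin n → Y) → ℝ := fun y => ∑ P ∈ T, ∏ i, outDist P W (y i) with hS
  have hTP : ∀ P ∈ T, IsPMF P := by
    intro P hP
    obtain ⟨x, -, rfl⟩ := Finset.mem_image.1 hP
    exact isPMF_empType hn0 x
  have hprod : ∀ P ∈ T, ∀ y : Fin n → Y, 0 ≤ ∏ i, outDist P W (y i) := fun P hP y =>
    Finset.prod_nonneg fun i _ => outDist_nonneg (hTP P hP) hW _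
  have hSsum : ∑ y, S y ≤ ((n : ℝ) + 1) ^ Fintype.card X := by
    rw [hS, Finset.sum_comm, Finset.sum_congr rfl (g := fun _ => (1 : ℝ)) (fun P hP =>
      sum_prod_eq_one (fun _ => outDist P W) fun _ => sum_outDist (hTP P hP) hW)]
    rw [Finset.sum_const, nsmul_eq_mul, mul_one]
    exact_mod_cast card_image_empType_le X n
  refine id_converse_one_shot (Wn W n) (isChannel_Wn hW n) _ S
    (fun y => Finset.sum_nonneg fun P hP => hprod P hP y) (Real.exp (n * (R - ε / 2))) δ
    (Real.exp_pos _).le hδ.le ?_ M hM ((mul_le_mul_of_nonneg_right hSsum (by positivity)).trans hM1)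
    k ?_ Q hQD.1 D l1 l2 hl1 hl2 hQD.2.1 hQD.2.2
  · intro x hx
    simp only [Finset.mem_filter, Finset.mem_univ, true_and, not_lt] at hx
    refine le_trans (Finset.sum_le_sum fun y _ => ?_)
      ((sum_Wn_of_large_density_le hW hn0 x (half_pos hε)).trans (le_trans (le_of_eq ?_) hn2.le))
    · have hle : Real.exp (n * (mutInf (empType x) W + ε / 2)) *
          ∏ i, outDist (empType x) W (y i) ≤ Real.exp (n * (R - ε / 2)) * S y := by
        have hmem : empType x ∈ T := Finset.mem_image_of_mem _ (mem_univ x)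
        refine mul_le_mul ?_ ?_ (hprod _ hmem y) (Real.exp_pos _).le
        · gcongr
          linarith
        · exact Finset.single_le_sum (f := fun P => ∏ i, outDist P W (y i))
            (fun P hP => hprod P hP y) hmem
      have h0 := (isChannel_Wn hW n).1 x y
      split_ifs with h1 h2 h2
      · exact le_rfl
      · exact absurd (hle.trans_lt h1) h2
      · exact h0
      · exact le_rfl
    · field_simp
  · rw [Fintype.card_fun, Fintype.card_fin, Nat.cast_pow]
    refine hM2.trans (mul_le_mul_of_nonneg_left ?_ hδ.le)
    rw [hk]
    exact Nat.le_ceil _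

lemma isChannel_margY {X Y Z : Type*} [Fintype Y] [Fintype Z] {W : X → Y → Z → ℝ}
    (hW : IsBC W) : IsChannel (margY W) :=
  ⟨fun x y => Finset.sum_nonneg fun z _ => hW.1 x y z, hW.2⟩

lemma isChannel_margZ {X Y Z : Type*} [Fintype Y] [Fintype Z] {W : X → Y → Z → ℝ}
    (hW : IsBC W) : IsChannel (margZ W) :=
  ⟨fun x z => Finset.sum_nonneg fun y _ => hW.1 x y z,
    fun x => (Finset.sum_comm).trans (hW.2 x)⟩

lemma isPMF_average {α : Type*} [Fintype α] {k : ℕ} (hk : 0 < k) {Q : Fin k → α → ℝ}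
    (hQ : ∀ m, IsPMF (Q m)) : IsPMF fun x => (k : ℝ)⁻¹ * ∑ m, Q m x := by
  have hk' : (k : ℝ) ≠ 0 := by exact_mod_cast hk.ne'
  refine ⟨fun x => mul_nonneg (by positivity) (Finset.sum_nonneg fun m _ => (hQ m).1 x), ?_⟩
  rw [← Finset.mul_sum, Finset.sum_comm]
  simp [(hQ _).2, hk']

/-- **Claim 3.** Strong converse part of Theorem 3. -/
theorem bc_id_strong_converse
    {X Y Z : Type} [Fintype X] [Fintype Y] [Fintype Z]
    [Nonempty X] [Nonempty Y] [Nonempty Z]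
    (W : X → Y → Z → ℝ) (hW : IsBC W)
    (RY RZ : ℝ) (hRY : 0 ≤ RY) (hRZ : 0 ≤ RZ)
    (l1Y l2Y l1Z l2Z : ℝ)
    (h1Y : 0 < l1Y) (h2Y : 0 < l2Y) (h1Z : 0 < l1Z) (h2Z : 0 < l2Z)
    (hsum : l1Y + l2Y + l1Z + l2Z < 1)
    (ε : ℝ) (hε : 0 < ε) :
    ∃ η₀ : ℕ, ∀ n : ℕ, η₀ ≤ n →
      ∀ kY kZ : ℕ,
        kY = Nat.ceil (Real.exp (Real.exp (n * RY))) →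
        kZ = Nat.ceil (Real.exp (Real.exp (n * RZ))) →
        ∀ (Q : Fin kY → Fin kZ → (Fin n → X) → ℝ)
          (DY : Fin kY → Finset (Fin n → Y)) (DZ : Fin kZ → Finset (Fin n → Z)),
          IsBCIDCode n kY kZ W Q DY DZ l1Y l2Y l1Z l2Z →
          ∃ P : X → ℝ, IsPMF P ∧
            RY < mutInf P (margY W) + ε ∧ RZ < mutInf P (margZ W) + ε := by

  obtain ⟨δ, hδ, hδsum⟩ : ∃ δ : ℝ, 0 < δ ∧ l1Y + l2Y + l1Z + l2Z + 8 * δ < 1 :=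
    ⟨(1 - (l1Y + l2Y + l1Z + l2Z)) / 9, by linarith, by linarith⟩
  obtain ⟨η₀, hη₀⟩ := Filter.eventually_atTop.1
    ((eventually_mass_good_types (isChannel_margY hW) RY ε δ l1Y l2Y hRY hε hδ h1Y.le h2Y.le).and
      ((eventually_mass_good_types (isChannel_margZ hW) RZ ε δ l1Z l2Z hRZ hε hδ h1Z.le
        h2Z.le).and (Filter.eventually_ge_atTop 1)))
  refine ⟨η₀, fun n hn kY kZ hkY hkZ Q DY DZ hcode => ?_⟩
  obtain ⟨hY, hZ, hn1⟩ := hη₀ n hn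
  have hkY0 : 0 < kY := hkY ▸ Nat.ceil_pos.2 (Real.exp_pos _)
  have hkZ0 : 0 < kZ := hkZ ▸ Nat.ceil_pos.2 (Real.exp_pos _)
  have hkY' : (0 : ℝ) < kY := by exact_mod_cast hkY0
  have hkZ' : (0 : ℝ) < kZ := by exact_mod_cast hkZ0
  have hYm := hY kY hkY _ DY
    ⟨fun my => isPMF_average hkZ0 fun mz => hcode.1 my mz, hcode.2.1⟩
  have hZm := hZ kZ hkZ _ DZ
    ⟨fun mz => isPMF_average hkY0 fun my => hcode.1 my mz, hcode.2.2⟩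
  set q : (Fin n → X) → ℝ := fun x => (kY : ℝ)⁻¹ * ((kZ : ℝ)⁻¹ * ∑ my, ∑ mz, Q my mz x) with hq
  have hq0 : ∀ x, 0 ≤ q x := fun x => mul_nonneg (by positivity) (mul_nonneg (by positivity)
    (Finset.sum_nonneg fun my _ => Finset.sum_nonneg fun mz _ => (hcode.1 my mz).1 x))
  have hq1 : ∑ x, q x = 1 := by
    have := (isPMF_average hkY0 fun my => isPMF_average hkZ0 fun mz => hcode.1 my mz).2
    simpa only [hq, Finset.mul_sum] using this
  have hqY : ∀ G : Finset (Fin n → X),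
      ∑ my, ∑ x ∈ G, (kZ : ℝ)⁻¹ * ∑ mz, Q my mz x = kY * ∑ x ∈ G, q x := by
    intro G
    rw [Finset.sum_comm, Finset.mul_sum]
    refine Finset.sum_congr rfl fun x _ => ?_
    rw [← Finset.mul_sum, hq]
    field_simp
  have hqZ : ∀ G : Finset (Fin n → X),
      ∑ mz, ∑ x ∈ G, (kY : ℝ)⁻¹ * ∑ my, Q my mz x = kZ * ∑ x ∈ G, q x := by
    intro G
    rw [Finset.sum_comm, Finset.mul_sum]
    refine Finset.sum_congr rfl fun x _ => ?_
    rw [← Finset.mul_sum, hq, Finset.sum_comm]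
    field_simp
  rw [hqY, mul_le_mul_iff_right₀ hkY'] at hYm
  rw [hqZ, mul_le_mul_iff_right₀ hkZ'] at hZm
  by_contra! hcon
  have hdisj : Disjoint
      ({x | RY < mutInf (empType x) (margY W) + ε} : Finset (Fin n → X))
      ({x | RZ < mutInf (empType x) (margZ W) + ε} : Finset (Fin n → X)) := by
    rw [Finset.disjoint_filter]
    intro x _ hx
    exact not_lt.2 (hcon _ (isPMF_empType hn1 x) hx)
  have hle := Finset.sum_le_univ_sum_of_nonneg (s := Finset.disjUnion _ _ hdisj) hq0
  rw [Finset.sum_disjUnion, hq1] at hle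
  linarith
end
end

section
/- (Theorem 7: inner bound for the three-receiver BC, with exponentially decaying errors and deterministic encoders.) Let W(y₁,y₂,y₃|x) be a three-receiver BC, let P be a PMF on 𝒳, and let rates satisfy 0 < R_k < min{ I(P, W_k), Σ_{l∈{1,2,3}\{k}} I(P, W_l) } for every k ∈ {1,2,3}. Then there exist τ > 0 and n₀ ∈ ℕ such that for every n ≥ n₀ there exists an (n, {ℳ_k, e^{−nτ}, e^{−nτ}}_{k∈{1,2,3}}) average-error ID code for the BC with (1/n)·log log |ℳ_k| ≥ R_k for all k, in which every encoding PMF Q_{m₁,m₂,m₃} is a point mass on a single sequence in 𝒳ⁿ (deterministic encoder). -/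
open scoped Classical
open Finset

noncomputable section

/-- `W` is a three-receiver broadcast channel from `X` to `Y1 × Y2 × Y3`. -/
def IsBC3 {X Y1 Y2 Y3 : Type*} [Fintype Y1] [Fintype Y2] [Fintype Y3]
    (W : X → Y1 → Y2 → Y3 → ℝ) : Prop :=
  (∀ x y1 y2 y3, 0 ≤ W x y1 y2 y3) ∧ ∀ x, ∑ y1, ∑ y2, ∑ y3, W x y1 y2 y3 = 1

/-- Marginal channel to receiver 1. -/
def marg1 {X Y1 Y2 Y3 : Type*} [Fintype Y2] [Fintype Y3]
    (W : X → Y1 → Y2 → Y3 → ℝ) : X → Y1 → ℝ :=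
  fun x y1 => ∑ y2, ∑ y3, W x y1 y2 y3

/-- Marginal channel to receiver 2. -/
def marg2 {X Y1 Y2 Y3 : Type*} [Fintype Y1] [Fintype Y3]
    (W : X → Y1 → Y2 → Y3 → ℝ) : X → Y2 → ℝ :=
  fun x y2 => ∑ y1, ∑ y3, W x y1 y2 y3

/-- Marginal channel to receiver 3. -/
def marg3 {X Y1 Y2 Y3 : Type*} [Fintype Y1] [Fintype Y2]
    (W : X → Y1 → Y2 → Y3 → ℝ) : X → Y3 → ℝ :=
  fun x y3 => ∑ y1, ∑ y2, W x y1 y2 y3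

/-- Average-error ID code for the three-receiver BC: every `Q m1 m2 m3` is a
PMF on `Xⁿ`, and for each receiver `k` the mixtures (averaging uniformly over
the other two messages) form an ID code for the marginal channel `W_k`. -/
def IsBC3IDCode {X Y1 Y2 Y3 : Type*}
    [Fintype X] [Fintype Y1] [Fintype Y2] [Fintype Y3]
    (n k1 k2 k3 : ℕ) (W : X → Y1 → Y2 → Y3 → ℝ)
    (Q : Fin k1 → Fin k2 → Fin k3 → (Fin n → X) → ℝ)
    (D1 : Fin k1 → Finset (Fin n → Y1))
    (D2 : Fin k2 → Finset (Fin n → Y2))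
    (D3 : Fin k3 → Finset (Fin n → Y3))
    (l11 l21 l12 l22 l13 l23 : ℝ) : Prop :=
  (∀ m1 m2 m3, IsPMF (Q m1 m2 m3)) ∧
  IDCodeErr n (marg1 W)
    (fun m1 x => ((k2 * k3 : ℕ) : ℝ)⁻¹ * ∑ m2, ∑ m3, Q m1 m2 m3 x) D1 l11 l21 ∧
  IDCodeErr n (marg2 W)
    (fun m2 x => ((k1 * k3 : ℕ) : ℝ)⁻¹ * ∑ m1, ∑ m3, Q m1 m2 m3 x) D2 l12 l22 ∧
  IDCodeErr n (marg3 W)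
    (fun m3 x => ((k1 * k2 : ℕ) : ℝ)⁻¹ * ∑ m1, ∑ m2, Q m1 m2 m3 x) D3 l13 l23

/-- Expectation of `F` under the weights `μ` on a finite type. -/
def expectation {Ω : Type*} [Fintype Ω] (μ F : Ω → ℝ) : ℝ := ∑ ω, μ ω * F ω

/-- Probability of the event `A` under the weights `μ` on a finite type. -/
def probOf {Ω : Type*} [Fintype Ω] (μ : Ω → ℝ) (A : Ω → Prop) : ℝ :=
  expectation μ fun ω => if A ω then 1 else 0

/-- Product of the weights `w i` on a finite power. -/
def prodWeight {ι Ω : Type*} [Fintype ι] (w : ι → Ω → ℝ) (ω : ι → Ω) : ℝ := ∏ i, w i (ω i)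

section Probability

variable {ι Ω : Type*} [Fintype ι] [DecidableEq ι] [Fintype Ω]

lemma expectation_mono {μ : Ω → ℝ} (hμ : IsPMF μ) {F G : Ω → ℝ} (h : ∀ ω, F ω ≤ G ω) :
    expectation μ F ≤ expectation μ G :=
  sum_le_sum fun ω _ => mul_le_mul_of_nonneg_left (h ω) (hμ.1 ω)

lemma expectation_const {μ : Ω → ℝ} (hμ : IsPMF μ) (c : ℝ) :
    expectation μ (fun _ => c) = c := by
  rw [expectation, ← sum_mul, hμ.2, one_mul]

lemma expectation_add (μ F G : Ω → ℝ) :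
    expectation μ (fun ω => F ω + G ω) = expectation μ F + expectation μ G := by
  simp [expectation, mul_add, sum_add_distrib]

lemma expectation_const_mul (μ F : Ω → ℝ) (c : ℝ) :
    expectation μ (fun ω => c * F ω) = c * expectation μ F := by
  simp only [expectation, mul_sum]
  exact sum_congr rfl fun _ _ => by ring

lemma expectation_sum {J : Type*} (s : Finset J) (μ : Ω → ℝ) (F : J → Ω → ℝ) :
    expectation μ (fun ω => ∑ j ∈ s, F j ω) = ∑ j ∈ s, expectation μ (F j) := by
  simp only [expectation, mul_sum]
  exact sum_comm

lemma exists_le_expectation {μ : Ω → ℝ} (hμ : IsPMF μ) {F : Ω → ℝ} {c : ℝ}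
    (h : expectation μ F ≤ c) : ∃ ω, F ω ≤ c := by
  by_contra! hc
  have h1 : ∑ ω, μ ω * (F ω - c) ≤ 0 := by
    have : ∑ ω, μ ω * (F ω - c) = expectation μ F - c := by
      simp only [mul_sub, sum_sub_distrib, ← sum_mul, hμ.2, one_mul, expectation]
    linarith
  have h0 : ∀ ω ∈ univ, 0 ≤ μ ω * (F ω - c) := fun ω _ =>
    mul_nonneg (hμ.1 ω) (sub_nonneg.2 (hc ω).le)
  have hz := (sum_eq_zero_iff_of_nonneg h0).1 (le_antisymm h1 (sum_nonneg h0))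
  have : ∑ ω, μ ω = 0 := sum_eq_zero fun ω hω => by
    rcases mul_eq_zero.1 (hz ω hω) with h | h
    · exact h
    · exact absurd h (sub_pos.2 (hc ω)).ne'
  rw [hμ.2] at this
  exact one_ne_zero this

lemma probOf_or_le {μ : Ω → ℝ} (hμ : IsPMF μ) (A B : Ω → Prop) :
    probOf μ (fun ω => A ω ∨ B ω) ≤ probOf μ A + probOf μ B := by
  rw [probOf, probOf, probOf, ← expectation_add]
  refine expectation_mono hμ fun ω => ?_
  by_cases hA : A ω <;> by_cases hB : B ω <;> simp [hA, hB]

lemma probOf_exists_le {J : Type*} [Fintype J] {μ : Ω → ℝ} (hμ : IsPMF μ) (A : J → Ω → Prop)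
    {δ : ℝ} (h : ∀ j, probOf μ (A j) ≤ δ) :
    probOf μ (fun ω => ∃ j, A j ω) ≤ Fintype.card J * δ := by
  calc probOf μ (fun ω => ∃ j, A j ω)
      ≤ expectation μ (fun ω => ∑ j, if A j ω then 1 else 0) := by
        refine expectation_mono hμ fun ω => ?_
        split_ifs with hA
        · obtain ⟨j, hj⟩ := hA
          calc (1 : ℝ) = if A j ω then 1 else 0 := by simp [hj]
            _ ≤ _ := single_le_sum (f := fun j => if A j ω then (1 : ℝ) else 0)
              (fun i _ => by split_ifs <;> norm_num) (mem_univ j)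
        · exact sum_nonneg fun i _ => by split_ifs <;> norm_num
    _ = ∑ j, probOf μ (A j) := expectation_sum ..
    _ ≤ ∑ _j : J, δ := sum_le_sum fun j _ => h j
    _ = _ := by simp

lemma exists_not_of_probOf_lt_one {μ : Ω → ℝ} (hμ : IsPMF μ) {A : Ω → Prop}
    (h : probOf μ A < 1) : ∃ ω, ¬ A ω := by
  obtain ⟨ω, hω⟩ := exists_le_expectation hμ (le_refl (probOf μ A))
  refine ⟨ω, fun hA => ?_⟩
  simp only [hA, if_true] at hω
  linarith

lemma probOf_mono {μ : Ω → ℝ} (hμ : IsPMF μ) {A B : Ω → Prop} (h : ∀ ω, A ω → B ω) :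
    probOf μ A ≤ probOf μ B := by
  refine expectation_mono hμ fun ω => ?_
  by_cases hA : A ω
  · simp [hA, h ω hA]
  · simp only [hA, if_false]; split_ifs <;> norm_num

lemma probOf_false (μ : Ω → ℝ) {A : Ω → Prop} (h : ∀ ω, ¬ A ω) : probOf μ A = 0 := by
  simp [probOf, expectation, h]

lemma expectation_prodWeight_prod (w f : ι → Ω → ℝ) :
    expectation (prodWeight w) (fun ω => ∏ i, f i (ω i)) = ∏ i, ∑ b, w i b * f i b := by
  rw [Finset.prod_univ_sum, Fintype.piFinset_univ]
  exact sum_congr rfl fun ω _ => by rw [prodWeight, ← prod_mul_distrib]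

lemma isPMF_prodWeight {w : ι → Ω → ℝ} (hw : ∀ i, IsPMF (w i)) : IsPMF (prodWeight w) := by
  refine ⟨fun ω => prod_nonneg fun i _ => (hw i).1 _, ?_⟩
  have h := expectation_prodWeight_prod w fun _ _ => 1
  simp only [expectation, prod_const_one, mul_one] at h
  rw [h]
  exact prod_eq_one fun i _ => (hw i).2

/-- Resampling one coordinate: a bound on the conditional expectation given the other
coordinates bounds the expectation. -/
lemma expectation_prodWeight_le {w : ι → Ω → ℝ} (hw : ∀ i, IsPMF (w i)) (i : ι)
    {F : (ι → Ω) → ℝ} {δ : ℝ}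
    (h : ∀ ω, expectation (w i) (fun b => F (Function.update ω i b)) ≤ δ) :
    expectation (prodWeight w) F ≤ δ := by
  have key : expectation (prodWeight w) F = expectation (prodWeight w)
      (fun ω => expectation (w i) fun b => F (Function.update ω i b)) := by
    have hsplit : ∀ H : (ι → Ω) → ℝ, expectation (prodWeight w) H =
        ∑ b, ∑ σ : {j // j ≠ i} → Ω, w i b * ((∏ j : {j // j ≠ i}, w j (σ j)) *
          H ((Equiv.funSplitAt i Ω).symm (b, σ))) := by
      intro H
      rw [expectation, ← Equiv.sum_comp (Equiv.funSplitAt i Ω).symm, Fintype.sum_prod_type]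
      refine sum_congr rfl fun b _ => sum_congr rfl fun σ _ => ?_
      rw [← mul_assoc]
      congr 1
      rw [prodWeight, Fintype.prod_eq_mul_prod_subtype_ne _ i]
      congr 1
      · simp [Equiv.funSplitAt, Equiv.piSplitAt]
      · exact prod_congr rfl fun j _ => by simp [Equiv.funSplitAt, Equiv.piSplitAt, j.2]
    rw [hsplit, hsplit]
    have hupd : ∀ (b c : Ω) (σ : {j // j ≠ i} → Ω),
        Function.update ((Equiv.funSplitAt i Ω).symm (b, σ)) i c
          = (Equiv.funSplitAt i Ω).symm (c, σ) := by
      intro b c σ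
      funext j
      by_cases hj : j = i
      · subst hj; simp [Equiv.funSplitAt, Equiv.piSplitAt]
      · simp [Equiv.funSplitAt, Equiv.piSplitAt, hj]
    simp only [hupd, ← mul_sum]
    rw [← sum_mul, (hw i).2, one_mul]
    simp only [expectation, mul_sum]
    rw [sum_comm]
    exact sum_congr rfl fun _ _ => sum_congr rfl fun _ _ => by ring
  rw [key]
  calc _ ≤ expectation (prodWeight w) (fun _ => δ) :=
        expectation_mono (isPMF_prodWeight hw) h
    _ = δ := expectation_const (isPMF_prodWeight hw) δ

lemma probOf_prodWeight_le {w : ι → Ω → ℝ} (hw : ∀ i, IsPMF (w i)) (i : ι)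
    {A : (ι → Ω) → Prop} {δ : ℝ}
    (h : ∀ ω, probOf (w i) (fun b => A (Function.update ω i b)) ≤ δ) :
    probOf (prodWeight w) A ≤ δ :=
  expectation_prodWeight_le hw i h

lemma exp_le_one_add_two_mul {x : ℝ} (h0 : 0 ≤ x) (h1 : x ≤ 1) : Real.exp x ≤ 1 + 2 * x := by
  have h := convexOn_exp.2 (Set.mem_univ (0 : ℝ)) (Set.mem_univ (1 : ℝ))
    (sub_nonneg.2 h1) h0 (by ring)
  simp only [smul_eq_mul, mul_zero, mul_one, zero_add, Real.exp_zero] at h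
  nlinarith [Real.exp_one_lt_d9]

lemma exp_neg_le_one_sub_half {x : ℝ} (h0 : 0 ≤ x) (h1 : x ≤ 1) :
    Real.exp (-x) ≤ 1 - x / 2 := by
  have h := convexOn_exp.2 (Set.mem_univ (0 : ℝ)) (Set.mem_univ (-1 : ℝ))
    (sub_nonneg.2 h1) h0 (by ring)
  simp only [smul_eq_mul, mul_zero, mul_one, zero_add, Real.exp_zero, mul_neg] at h
  have h2 : Real.exp (-1) ≤ 1 / 2 := by
    rw [Real.exp_neg, inv_le_comm₀ (Real.exp_pos 1) (by norm_num)]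
    linarith [Real.add_one_le_exp (1 : ℝ)]
  nlinarith

lemma expectation_exp_sum_le {w : ι → Ω → ℝ} (hw : ∀ i, IsPMF (w i)) {X : ι → Ω → ℝ} {c d : ℝ}
    (h : ∀ i b, Real.exp (c * X i b) ≤ 1 + d * X i b) :
    expectation (prodWeight w) (fun ω => Real.exp (c * ∑ i, X i (ω i)))
      ≤ Real.exp (d * ∑ i, expectation (w i) (X i)) := by
  simp only [mul_sum, Real.exp_sum]
  rw [expectation_prodWeight_prod w fun i b => Real.exp (c * X i b)]
  refine prod_le_prod (fun i _ => sum_nonneg fun b _ =>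
    mul_nonneg ((hw i).1 b) (Real.exp_pos _).le) fun i _ => ?_
  calc ∑ b, w i b * Real.exp (c * X i b) ≤ ∑ b, w i b * (1 + d * X i b) :=
        sum_le_sum fun b _ => mul_le_mul_of_nonneg_left (h i b) ((hw i).1 b)
    _ = d * expectation (w i) (X i) + 1 := by
        simp only [mul_add, sum_add_distrib, mul_one, (hw i).2, expectation, mul_sum]
        rw [add_comm]
        congr 1
        exact sum_congr rfl fun _ _ => by ring
    _ ≤ _ := Real.add_one_le_exp _

/-- Chernoff bound for the upper tail of a sum of independent `[0,1]`-valued variables. -/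
lemma probOf_lt_sum_le {w : ι → Ω → ℝ} (hw : ∀ i, IsPMF (w i)) {X : ι → Ω → ℝ}
    (h0 : ∀ i b, 0 ≤ X i b) (h1 : ∀ i b, X i b ≤ 1) {t : ℝ}
    (hmean : ∑ i, expectation (w i) (X i) ≤ t / 4) :
    probOf (prodWeight w) (fun ω => t < ∑ i, X i (ω i)) ≤ Real.exp (-(t / 2)) := by
  have hb := expectation_exp_sum_le hw (X := X) (c := 1) (d := 2) fun i b => by
    simpa using exp_le_one_add_two_mul (h0 i b) (h1 i b)
  calc probOf (prodWeight w) (fun ω => t < ∑ i, X i (ω i))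
      ≤ expectation (prodWeight w)
          (fun ω => Real.exp (-t) * Real.exp (1 * ∑ i, X i (ω i))) := by
        refine expectation_mono (isPMF_prodWeight hw) fun ω => ?_
        rw [← Real.exp_add]
        split_ifs with h
        · exact Real.one_le_exp (by linarith)
        · exact (Real.exp_pos _).le
    _ ≤ Real.exp (-t) * Real.exp (2 * ∑ i, expectation (w i) (X i)) := by
        rw [expectation_const_mul]
        exact mul_le_mul_of_nonneg_left hb (Real.exp_pos _).le
    _ ≤ _ := by
        rw [← Real.exp_add]
        exact Real.exp_le_exp.2 (by linarith)

/-- Chernoff bound for the lower tail of a sum of independent `[0,1]`-valued variables. -/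
lemma probOf_sum_lt_le {w : ι → Ω → ℝ} (hw : ∀ i, IsPMF (w i)) {X : ι → Ω → ℝ}
    (h0 : ∀ i b, 0 ≤ X i b) (h1 : ∀ i b, X i b ≤ 1) {a : ℝ}
    (hmean : a ≤ ∑ i, expectation (w i) (X i)) :
    probOf (prodWeight w) (fun ω => ∑ i, X i (ω i) < a / 4) ≤ Real.exp (-(a / 4)) := by
  have hb := expectation_exp_sum_le hw (X := X) (c := -1) (d := -(1 / 2)) fun i b => by
    have := exp_neg_le_one_sub_half (h0 i b) (h1 i b)
    rw [neg_one_mul]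
    linarith
  calc probOf (prodWeight w) (fun ω => ∑ i, X i (ω i) < a / 4)
      ≤ expectation (prodWeight w)
          (fun ω => Real.exp (a / 4) * Real.exp (-1 * ∑ i, X i (ω i))) := by
        refine expectation_mono (isPMF_prodWeight hw) fun ω => ?_
        rw [← Real.exp_add]
        split_ifs with h
        · exact Real.one_le_exp (by linarith)
        · exact (Real.exp_pos _).le
    _ ≤ Real.exp (a / 4) * Real.exp (-(1 / 2) * ∑ i, expectation (w i) (X i)) := by
        rw [expectation_const_mul]
        exact mul_le_mul_of_nonneg_left hb (Real.exp_pos _).le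
    _ ≤ _ := by
        rw [← Real.exp_add]
        exact Real.exp_le_exp.2 (by linarith)

end Probability

/-- The Bernoulli weights with success probability `p`. -/
def bernoulliWeight (p : ℝ) (b : Bool) : ℝ := if b then p else 1 - p

lemma isPMF_bernoulliWeight {p : ℝ} (h0 : 0 ≤ p) (h1 : p ≤ 1) : IsPMF (bernoulliWeight p) := by
  refine ⟨fun b => ?_, by simp [bernoulliWeight]⟩
  cases b <;> simp [bernoulliWeight, h0, h1]

/-- The weights of a random subset that contains each point independently with probability `p`. -/
def subsetWeight (ι : Type*) [Fintype ι] (p : ℝ) : (ι → Bool) → ℝ :=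
  prodWeight fun _ => bernoulliWeight p

/-- The subset with indicator function `f`. -/
def trueSet {ι : Type*} [Fintype ι] (f : ι → Bool) : Finset ι := univ.filter fun v => f v = true

section Family

variable {ι M : Type*} [Fintype ι] [DecidableEq ι] [Fintype M] [DecidableEq M]

lemma isPMF_subsetWeight {p : ℝ} (h0 : 0 ≤ p) (h1 : p ≤ 1) : IsPMF (subsetWeight ι p) :=
  isPMF_prodWeight fun _ => isPMF_bernoulliWeight h0 h1

omit [DecidableEq ι] in
lemma sum_trueSet (f : ι → Bool) (g : ι → ℝ) :
    ∑ v ∈ trueSet f, g v = ∑ v, if f v = true then g v else 0 := by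
  rw [trueSet, sum_filter]

lemma expectation_bernoulliWeight (p c : ℝ) :
    expectation (bernoulliWeight p) (fun b => if b = true then c else 0) = p * c := by
  simp [expectation, bernoulliWeight]

lemma probOf_lt_sum_trueSet_le {p : ℝ} (h0 : 0 ≤ p) (h1 : p ≤ 1) {g : ι → ℝ}
    (hg0 : ∀ v, 0 ≤ g v) (hg1 : ∀ v, g v ≤ 1) {t : ℝ} (ht : p * ∑ v, g v ≤ t / 4) :
    probOf (subsetWeight ι p) (fun f => t < ∑ v ∈ trueSet f, g v) ≤ Real.exp (-(t / 2)) := by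
  simp only [sum_trueSet]
  refine probOf_lt_sum_le (X := fun v b => if b = true then g v else 0)
    (fun _ => isPMF_bernoulliWeight h0 h1) (fun v b => ?_) (fun v b => ?_) ?_
  · split_ifs
    exacts [hg0 v, le_rfl]
  · split_ifs
    exacts [hg1 v, zero_le_one]
  · simpa only [expectation_bernoulliWeight, ← mul_sum] using ht

lemma probOf_sum_trueSet_lt_le {p : ℝ} (h0 : 0 ≤ p) (h1 : p ≤ 1) {g : ι → ℝ}
    (hg0 : ∀ v, 0 ≤ g v) (hg1 : ∀ v, g v ≤ 1) :
    probOf (subsetWeight ι p) (fun f => ∑ v ∈ trueSet f, g v < p * (∑ v, g v) / 4)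
      ≤ Real.exp (-(p * (∑ v, g v) / 4)) := by
  simp only [sum_trueSet]
  refine probOf_sum_lt_le (X := fun v b => if b = true then g v else 0)
    (fun _ => isPMF_bernoulliWeight h0 h1) (fun v b => ?_) (fun v b => ?_) ?_
  · split_ifs
    exacts [hg0 v, le_rfl]
  · split_ifs
    exacts [hg1 v, zero_le_one]
  · simp only [expectation_bernoulliWeight, ← mul_sum, le_refl]

lemma probOf_card_inter_trueSet_lt_le {p : ℝ} (h0 : 0 ≤ p) (h1 : p ≤ 1) (A : Finset ι) :
    probOf (subsetWeight ι p) (fun f => (#(A ∩ trueSet f) : ℝ) < p * #A / 4)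
      ≤ Real.exp (-(p * #A / 4)) := by
  have h := probOf_sum_trueSet_lt_le h0 h1 (g := fun v => if v ∈ A then 1 else 0)
    (fun v => by split_ifs <;> norm_num) (fun v => by split_ifs <;> norm_num)
  have e : ∀ f : ι → Bool, ∑ v ∈ trueSet f, (if v ∈ A then (1 : ℝ) else 0)
      = #(A ∩ trueSet f) := fun f => by
    rw [sum_boole, filter_mem_eq_inter, inter_comm]
  have e' : ∑ v, (if v ∈ A then (1 : ℝ) else 0) = #A := by simp
  simpa only [e, e'] using h

lemma probOf_mem_trueSet_le {p : ℝ} (h0 : 0 ≤ p) (h1 : p ≤ 1) (v : ι) :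
    probOf (subsetWeight ι p) (fun f => v ∈ trueSet f) ≤ p := by
  refine expectation_prodWeight_le (fun _ => isPMF_bernoulliWeight h0 h1) v fun f => ?_
  simp [trueSet, expectation, bernoulliWeight]

/-- A random family of subsets with density `p`: membership is spread evenly over the family,
the members are spread evenly over every large set, and the weight that a member carries under the
function attached to a different member is small. -/
lemma exists_subset_family {p η ε γ κ : ℝ} (hp0 : 0 ≤ p) (hp1 : p ≤ 1)
    (hγ : 0 ≤ γ) (F : Finset ι → ι → ℝ) (hF0 : ∀ V v, 0 ≤ F V v) (hF1 : ∀ V v, F V v ≤ 1)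
    (hF : ∀ V, ∑ v, F V v ≤ #V * (1 + γ))
    (hη : 16 * p * (1 + γ) ≤ η) (hε : Real.exp (-(κ / 64)) ≤ ε / 4)
    (hunion : (Fintype.card M : ℝ) ^ 2 * Real.exp (-(η * (p * Fintype.card ι) / 2))
      + Fintype.card M * Real.exp (-(2 * (p * Fintype.card ι)))
      + 2 ^ Fintype.card ι * Real.exp (-(ε * Fintype.card M / 2))
      + Fintype.card ι * Real.exp (-(2 * (p * Fintype.card M)))
      + Fintype.card M * Real.exp (-(p * Fintype.card ι / 4)) < 1) :
    ∃ V : M → Finset ι,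
      (∀ m m', m ≠ m' → ∑ v ∈ V m, F (V m') v ≤ η * (p * Fintype.card ι)) ∧
      (∀ A : Finset ι, κ / 16 ≤ p * #A →
        (#{m | (#(A ∩ V m) : ℝ) < p * #A / 4} : ℝ) ≤ ε * Fintype.card M) ∧
      (∀ v, (#{m | v ∈ V m} : ℝ) ≤ 4 * (p * Fintype.card M)) ∧
      ∀ m, p * Fintype.card ι / 4 ≤ #(V m) := by
  set N : ℝ := (Fintype.card ι : ℝ)
  set K : ℝ := (Fintype.card M : ℝ)
  have hN : 0 ≤ N := Nat.cast_nonneg _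
  have hB := isPMF_subsetWeight (ι := ι) hp0 hp1
  have hμ : IsPMF (prodWeight fun _ : M => subsetWeight ι p) := isPMF_prodWeight fun _ => hB
  have b1 : probOf (prodWeight fun _ : M => subsetWeight ι p) (fun ω => ∃ q : M × M,
      q.1 ≠ q.2 ∧ (#(trueSet (ω q.2)) : ℝ) ≤ 4 * (p * N) ∧
        η * (p * N) < ∑ v ∈ trueSet (ω q.1), F (trueSet (ω q.2)) v)
      ≤ K ^ 2 * Real.exp (-(η * (p * N) / 2)) := by
    refine (probOf_exists_le hμ _ (δ := Real.exp (-(η * (p * N) / 2))) ?_).trans_eq ?_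
    · rintro ⟨m, m'⟩
      by_cases hm : m = m'
      · rw [probOf_false _ fun ω h => h.1 hm]
        exact (Real.exp_pos _).le
      refine probOf_prodWeight_le (fun _ => hB) m fun ω => ?_
      simp only [Function.update_self, Function.update_of_ne (Ne.symm hm)]
      by_cases hc : (#(trueSet (ω m')) : ℝ) ≤ 4 * (p * N)
      · refine (probOf_mono hB fun f h => h.2.2).trans
          (probOf_lt_sum_trueSet_le hp0 hp1 (hF0 _) (hF1 _) ?_)
        calc p * ∑ v, F (trueSet (ω m')) v ≤ p * (4 * (p * N) * (1 + γ)) := by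
              refine mul_le_mul_of_nonneg_left ((hF _).trans ?_) hp0
              exact mul_le_mul_of_nonneg_right hc (by linarith)
          _ = 16 * p * (1 + γ) * (p * N) / 4 := by ring
          _ ≤ _ := by gcongr
      · refine (probOf_false _ fun f h => hc h.2.1).trans_le (Real.exp_pos _).le
    · rw [Fintype.card_prod, Nat.cast_mul, sq]
  have b2 : probOf (prodWeight fun _ : M => subsetWeight ι p) (fun ω => ∃ m,
      4 * (p * N) < #(trueSet (ω m))) ≤ K * Real.exp (-(2 * (p * N))) := by
    refine probOf_exists_le hμ _ fun m => ?_
    refine probOf_prodWeight_le (fun _ => hB) m fun ω => ?_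
    simp only [Function.update_self]
    have h := probOf_lt_sum_trueSet_le (ι := ι) hp0 hp1 (g := fun _ => 1) (t := 4 * (p * N))
      (fun _ => zero_le_one) (fun _ => le_rfl)
      (by simp only [sum_const, card_univ, nsmul_eq_mul, mul_one]; change p * N ≤ _; linarith)
    simp only [sum_const, nsmul_eq_mul, mul_one] at h
    refine h.trans_eq ?_
    congr 1
    ring
  have b3 : probOf (prodWeight fun _ : M => subsetWeight ι p) (fun ω => ∃ A : Finset ι,
      κ / 16 ≤ p * #A ∧ ε * K < #{m | (#(A ∩ trueSet (ω m)) : ℝ) < p * #A / 4})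
      ≤ 2 ^ Fintype.card ι * Real.exp (-(ε * K / 2)) := by
    refine (probOf_exists_le hμ _ (δ := Real.exp (-(ε * K / 2))) fun A => ?_).trans_eq ?_
    · by_cases hA : κ / 16 ≤ p * #A
      · refine (probOf_mono hμ fun ω h => h.2).trans ?_
        have h := probOf_lt_sum_le (fun _ : M => hB) (t := ε * K)
          (X := fun _ f => if (#(A ∩ trueSet f) : ℝ) < p * #A / 4 then 1 else 0)
          (fun _ f => by split_ifs <;> norm_num) (fun _ f => by split_ifs <;> norm_num) ?_
        · simpa only [sum_boole] using h
        · calc _ ≤ ∑ _m : M, ε / 4 := sum_le_sum fun m _ =>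
                ((probOf_card_inter_trueSet_lt_le hp0 hp1 A).trans
                  (Real.exp_le_exp.2 (by linarith))).trans hε
            _ = _ := by
              rw [sum_const, nsmul_eq_mul, card_univ]; change K * _ = _; ring
      · exact (probOf_false _ fun ω h => hA h.1).trans_le (Real.exp_pos _).le
    · rw [Fintype.card_finset]; push_cast; rfl
  have b4 : probOf (prodWeight fun _ : M => subsetWeight ι p) (fun ω => ∃ v,
      4 * (p * K) < #{m | v ∈ trueSet (ω m)}) ≤ N * Real.exp (-(2 * (p * K))) := by
    refine probOf_exists_le hμ _ fun v => ?_
    have h := probOf_lt_sum_le (fun _ : M => hB) (t := 4 * (p * K))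
      (X := fun _ f => if v ∈ trueSet f then 1 else 0)
      (fun _ f => by split_ifs <;> norm_num) (fun _ f => by split_ifs <;> norm_num) ?_
    · simp only [sum_boole] at h
      refine h.trans_eq ?_
      congr 1
      ring
    · have hv : expectation (subsetWeight ι p) (fun f => if v ∈ trueSet f then 1 else 0) ≤ p := by
        convert probOf_mem_trueSet_le hp0 hp1 v
        simp only [probOf]
        congr! 3
      refine (sum_le_sum fun m _ => hv).trans_eq ?_
      rw [sum_const, nsmul_eq_mul, card_univ]
      change K * _ = _
      ring
  have b5 : probOf (prodWeight fun _ : M => subsetWeight ι p) (fun ω => ∃ m,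
      #(trueSet (ω m)) < p * N / 4) ≤ K * Real.exp (-(p * N / 4)) := by
    refine probOf_exists_le hμ _ fun m => ?_
    refine probOf_prodWeight_le (fun _ => hB) m fun ω => ?_
    simp only [Function.update_self]
    have h := probOf_card_inter_trueSet_lt_le hp0 hp1 (univ : Finset ι)
    simp only [univ_inter, card_univ] at h
    exact h
  have hlt := (((probOf_or_le hμ _ _).trans (add_le_add ((probOf_or_le hμ _ _).trans (add_le_add
    ((probOf_or_le hμ _ _).trans (add_le_add ((probOf_or_le hμ _ _).trans
      (add_le_add b1 b2)) b3)) b4)) b5)).trans_lt hunion)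
  obtain ⟨ω, hω⟩ := exists_not_of_probOf_lt_one hμ hlt
  push Not at hω
  obtain ⟨⟨⟨⟨h1, h2⟩, h3⟩, h4⟩, h5⟩ := hω
  exact ⟨fun m => trueSet (ω m), fun m m' hm => h1 (m, m') hm (h2 m'), h3, h4, h5⟩

end Family

section Encoder

variable {ι A B C : Type*} [Fintype ι] [DecidableEq ι] [Fintype A] [DecidableEq A]
  [Fintype B] [DecidableEq B] [Fintype C] [DecidableEq C]

/-- A family of subsets of density about `p` such that most of its members meet every large set
in the expected proportion and no point lies in too many members. -/
def IsSpreadFamily {ι M : Type*} [Fintype ι] [DecidableEq ι] [Fintype M] (p ε κ : ℝ)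
    (V : M → Finset ι) : Prop :=
  (∀ A : Finset ι, κ / 16 ≤ p * #A →
    (#{m | (#(A ∩ V m) : ℝ) < p * #A / 4} : ℝ) ≤ ε * Fintype.card M) ∧
  (∀ v, (#{m | v ∈ V m} : ℝ) ≤ 4 * (p * Fintype.card M)) ∧
  ∀ m, p * Fintype.card ι / 4 ≤ #(V m)

/-- For most parameters `q` the point `x a q` lies in `V a`, and the average over `q` of the
function attached to any other index is small there. -/
def IsReliable {ι M Q : Type*} [DecidableEq ι] [Fintype Q] (ε θ : ℝ) (V : M → Finset ι)
    (g : M → ι → ℝ) (x : M → Q → ι) : Prop :=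
  (∀ a, (#{q | x a q ∉ V a} : ℝ) ≤ ε * Fintype.card Q) ∧
  ∀ a a', a ≠ a' → ∑ q, g a' (x a q) ≤ θ * Fintype.card Q

omit [Fintype A] [DecidableEq A] [DecidableEq B] [DecidableEq C] in
lemma card_small_inter_le {pA pB pC ε κ : ℝ} {VA : A → Finset ι} {VB : B → Finset ι}
    {VC : C → Finset ι} (hpA : 0 ≤ pA) (hpB : 0 ≤ pB) (hpC : 0 ≤ pC) (hpC1 : pC ≤ 1)
    (hε : 0 ≤ ε) (hκ : κ = Fintype.card ι * (pA * pB * pC))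
    (hA : ∀ a, pA * Fintype.card ι / 4 ≤ #(VA a))
    (hB : IsSpreadFamily pB ε κ VB) (hC : IsSpreadFamily pC ε κ VC) (a : A) :
    (#{q : B × C | (#(VA a ∩ VB q.1 ∩ VC q.2) : ℝ) < κ / 64} : ℝ)
      ≤ 2 * ε * Fintype.card (B × C) := by
  have hN : (0 : ℝ) ≤ Fintype.card ι := Nat.cast_nonneg _
  have hAB : pA * pB * Fintype.card ι / 4 ≤ pB * #(VA a) := by
    have := mul_le_mul_of_nonneg_left (hA a) hpB
    linarith
  have hAB0 : 0 ≤ pA * pB * Fintype.card ι := by positivity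
  have hκ' : κ ≤ pA * pB * Fintype.card ι := by
    have := mul_le_mul_of_nonneg_left hpC1 hAB0
    rw [hκ]; linarith
  have hbad := hB.1 (VA a) (by linarith)
  have hrow : ∀ b, (#{c | (#(VA a ∩ VB b ∩ VC c) : ℝ) < κ / 64} : ℝ)
      ≤ (if (#(VA a ∩ VB b) : ℝ) < pB * #(VA a) / 4 then (Fintype.card C : ℝ) else 0)
        + ε * Fintype.card C := by
    intro b
    split_ifs with hb
    · have h1 : (#{c | (#(VA a ∩ VB b ∩ VC c) : ℝ) < κ / 64} : ℝ) ≤ Fintype.card C := by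
        exact_mod_cast card_le_univ _
      have : 0 ≤ ε * Fintype.card C := by positivity
      linarith
    · rw [zero_add]
      have h2 : pA * pB * pC * Fintype.card ι / 16 ≤ pC * #(VA a ∩ VB b) := by
        have := mul_le_mul_of_nonneg_left (not_lt.1 hb) hpC
        have := mul_le_mul_of_nonneg_left hAB hpC
        linarith
      have h3 : κ / 16 ≤ pC * #(VA a ∩ VB b) := by rw [hκ]; linarith
      refine le_trans ?_ (hC.1 _ h3)
      exact_mod_cast card_le_card fun c hc => by
        simp only [mem_filter, mem_univ, true_and] at hc ⊢
        linarith
  calc (#{q : B × C | (#(VA a ∩ VB q.1 ∩ VC q.2) : ℝ) < κ / 64} : ℝ)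
      = ∑ b, (#{c | (#(VA a ∩ VB b ∩ VC c) : ℝ) < κ / 64} : ℝ) := by
        simp only [← sum_boole, Fintype.sum_prod_type]
    _ ≤ ∑ b, ((if (#(VA a ∩ VB b) : ℝ) < pB * #(VA a) / 4 then (Fintype.card C : ℝ) else 0)
        + ε * Fintype.card C) := sum_le_sum fun b _ => hrow b
    _ = #{b | (#(VA a ∩ VB b) : ℝ) < pB * #(VA a) / 4} * (Fintype.card C : ℝ)
        + Fintype.card B * (ε * Fintype.card C) := by
        rw [sum_add_distrib, ← sum_filter, sum_const, sum_const, nsmul_eq_mul, nsmul_eq_mul,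
          card_univ]
    _ ≤ ε * Fintype.card B * Fintype.card C + Fintype.card B * (ε * Fintype.card C) := by
        gcongr
    _ = _ := by rw [Fintype.card_prod, Nat.cast_mul]; ring

/-- The uniform weights on `S` when `S` has at least `s` elements, a point mass otherwise. -/
def selectionWeight {ι : Type*} [DecidableEq ι] (s : ℝ) (v₀ : ι) (S : Finset ι) (v : ι) : ℝ :=
  if s ≤ #S then if v ∈ S then (#S : ℝ)⁻¹ else 0 else if v = v₀ then 1 else 0

lemma isPMF_selectionWeight {s : ℝ} (hs : 0 < s) (v₀ : ι) (S : Finset ι) :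
    IsPMF (selectionWeight s v₀ S) := by
  constructor
  · intro v
    unfold selectionWeight
    split_ifs <;> positivity
  · by_cases h : s ≤ #S
    · have : (#S : ℝ) ≠ 0 := (hs.trans_le h).ne'
      simp [selectionWeight, h, this]
    · simp [selectionWeight, h]

lemma expectation_selectionWeight_le {s : ℝ} (hs : 0 < s) (v₀ : ι) (S : Finset ι) {g : ι → ℝ}
    (h0 : ∀ v, 0 ≤ g v) (h1 : ∀ v, g v ≤ 1) :
    expectation (selectionWeight s v₀ S) g
      ≤ (if (#S : ℝ) < s then 1 else 0) + s⁻¹ * ∑ v ∈ S, g v := by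
  have hS : 0 ≤ ∑ v ∈ S, g v := sum_nonneg fun v _ => h0 v
  by_cases h : s ≤ #S
  · rw [if_neg (not_lt.2 h), zero_add]
    simp only [expectation, selectionWeight, if_pos h, ite_mul, zero_mul, sum_ite_mem, univ_inter,
      ← mul_sum]
    gcongr
  · rw [if_pos (not_le.1 h)]
    refine (expectation_mono (isPMF_selectionWeight hs v₀ S) h1).trans ?_
    rw [expectation_const (isPMF_selectionWeight hs v₀ S)]
    have : 0 ≤ s⁻¹ * ∑ v ∈ S, g v := by positivity
    linarith

omit [Fintype A] [DecidableEq A] [DecidableEq B] [DecidableEq C] in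
lemma sum_expectation_selectionWeight_le {pA pB pC ε η κ : ℝ} {VA : A → Finset ι}
    {VB : B → Finset ι} {VC : C → Finset ι} (hpA : 0 ≤ pA) (hpB : 0 ≤ pB) (hpC : 0 ≤ pC)
    (hpC1 : pC ≤ 1) (hε : 0 ≤ ε) (hκ : κ = Fintype.card ι * (pA * pB * pC)) (hκ0 : 0 < κ)
    (hA : ∀ a, pA * Fintype.card ι / 4 ≤ #(VA a))
    (hB : IsSpreadFamily pB ε κ VB) (hC : IsSpreadFamily pC ε κ VC) (v₀ : ι) (a : A)
    {g : ι → ℝ} (h0 : ∀ v, 0 ≤ g v) (h1 : ∀ v, g v ≤ 1)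
    (hg : ∑ v ∈ VA a, g v ≤ η * (pA * Fintype.card ι)) :
    ∑ q : B × C, expectation (selectionWeight (κ / 64) v₀ (VA a ∩ VB q.1 ∩ VC q.2)) g
      ≤ (2 * ε + 1024 * η) * Fintype.card (B × C) := by
  have hs : 0 < κ / 64 := by positivity
  have hsum : ∑ q : B × C, ∑ v ∈ VA a ∩ VB q.1 ∩ VC q.2, g v
      ≤ 16 * (pB * pC) * (η * (pA * Fintype.card ι)) * Fintype.card (B × C) := by
    calc ∑ q : B × C, ∑ v ∈ VA a ∩ VB q.1 ∩ VC q.2, g v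
        = ∑ q : B × C, ∑ v ∈ VA a, if v ∈ VB q.1 ∧ v ∈ VC q.2 then g v else 0 := by
          refine sum_congr rfl fun q _ => ?_
          rw [← sum_filter]
          refine sum_congr ?_ fun _ _ => rfl
          ext v; simp
      _ = ∑ v ∈ VA a, g v * (#{b | v ∈ VB b} * #{c | v ∈ VC c}) := by
          rw [sum_comm]
          refine sum_congr rfl fun v _ => ?_
          rw [← sum_boole, ← sum_boole, sum_mul_sum, mul_sum, Fintype.sum_prod_type]
          refine sum_congr rfl fun b _ => ?_
          rw [mul_sum]
          refine sum_congr rfl fun c _ => ?_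
          by_cases hb : v ∈ VB b <;> by_cases hc : v ∈ VC c <;> simp [hb, hc]
      _ ≤ ∑ v ∈ VA a, g v * ((4 * (pB * Fintype.card B)) * (4 * (pC * Fintype.card C))) := by
          refine sum_le_sum fun v _ => mul_le_mul_of_nonneg_left ?_ (h0 v)
          exact mul_le_mul (hB.2.1 v) (hC.2.1 v) (Nat.cast_nonneg _) (by positivity)
      _ ≤ (η * (pA * Fintype.card ι)) *
            ((4 * (pB * Fintype.card B)) * (4 * (pC * Fintype.card C))) := by
          rw [← sum_mul]
          gcongr
      _ = _ := by rw [Fintype.card_prod, Nat.cast_mul]; ring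
  calc _ ≤ ∑ q : B × C, ((if (#(VA a ∩ VB q.1 ∩ VC q.2) : ℝ) < κ / 64 then 1 else 0)
          + (κ / 64)⁻¹ * ∑ v ∈ VA a ∩ VB q.1 ∩ VC q.2, g v) :=
        sum_le_sum fun q _ => expectation_selectionWeight_le hs v₀ _ h0 h1
    _ = #{q : B × C | (#(VA a ∩ VB q.1 ∩ VC q.2) : ℝ) < κ / 64}
          + (κ / 64)⁻¹ * ∑ q : B × C, ∑ v ∈ VA a ∩ VB q.1 ∩ VC q.2, g v := by
        rw [sum_add_distrib, sum_boole, mul_sum]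
    _ ≤ 2 * ε * Fintype.card (B × C) + (κ / 64)⁻¹ *
          (16 * (pB * pC) * (η * (pA * Fintype.card ι)) * Fintype.card (B × C)) :=
        add_le_add (card_small_inter_le hpA hpB hpC hpC1 hε hκ hA hB hC a)
          (mul_le_mul_of_nonneg_left hsum (by positivity))
    _ = 2 * ε * Fintype.card (B × C) + (κ / 64)⁻¹ * (16 * η * κ * Fintype.card (B × C)) := by
        rw [hκ]; ring
    _ = _ := by field_simp; ring

omit [DecidableEq ι] in
lemma probOf_exists_lt_sum_le {I Q : Type*} [Fintype I] [DecidableEq I] [Fintype Q]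
    {w : I → ι → ℝ} (hw : ∀ i, IsPMF (w i)) (e : A × Q ≃ I) {g : A → ι → ℝ}
    (h0 : ∀ a v, 0 ≤ g a v) (h1 : ∀ a v, g a v ≤ 1) {t : ℝ}
    (ht : ∀ a a', a ≠ a' → ∑ q, expectation (w (e (a, q))) (g a') ≤ t / 4) :
    probOf (prodWeight w) (fun ω => ∃ j : A × A, j.1 ≠ j.2 ∧
      t < ∑ q, g j.2 (ω (e (j.1, q)))) ≤ (Fintype.card A : ℝ) ^ 2 * Real.exp (-(t / 2)) := by
  refine (probOf_exists_le (isPMF_prodWeight hw) _ (δ := Real.exp (-(t / 2))) ?_).trans_eq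
    (by rw [Fintype.card_prod, Nat.cast_mul, sq])
  rintro ⟨a, a'⟩
  by_cases ha : a = a'
  · rw [probOf_false _ fun ω h => h.1 ha]
    exact (Real.exp_pos _).le
  have hsum : ∀ H : I → ℝ, ∑ i, (if (e.symm i).1 = a then H i else 0) = ∑ q, H (e (a, q)) := by
    intro H
    rw [← Equiv.sum_comp e, Fintype.sum_prod_type, sum_comm]
    simp
  have h := probOf_lt_sum_le hw (t := t)
    (X := fun i v => if (e.symm i).1 = a then g a' v else 0)
    (fun i v => by split_ifs; exacts [h0 _ _, le_rfl])
    (fun i v => by split_ifs; exacts [h1 _ _, zero_le_one]) ?_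
  · refine (probOf_mono (isPMF_prodWeight hw) fun ω hω => ?_).trans h
    rw [hsum fun i => g a' (ω i)]
    exact hω.2
  · refine le_trans (le_of_eq ?_) (ht a a' ha)
    rw [← hsum fun i => expectation (w i) (g a')]
    refine sum_congr rfl fun i _ => ?_
    split_ifs <;> simp [expectation]

/-- A joint choice of a point in the intersection of three members of spread families, reliable
for each of the three families when averaged over the other two indices. -/
lemma exists_encoder {pA pB pC ε η κ : ℝ} {VA : A → Finset ι} {VB : B → Finset ι}
    {VC : C → Finset ι} (hpA : 0 ≤ pA) (hpB : 0 ≤ pB) (hpC : 0 ≤ pC)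
    (hpB1 : pB ≤ 1) (hpC1 : pC ≤ 1) (hε : 0 ≤ ε)
    (hκ : κ = Fintype.card ι * (pA * pB * pC)) (hκ0 : 0 < κ)
    (hA : IsSpreadFamily pA ε κ VA) (hB : IsSpreadFamily pB ε κ VB)
    (hC : IsSpreadFamily pC ε κ VC) (v₀ : ι)
    {gA : A → ι → ℝ} {gB : B → ι → ℝ} {gC : C → ι → ℝ}
    (hA0 : ∀ a v, 0 ≤ gA a v) (hA1 : ∀ a v, gA a v ≤ 1)
    (hB0 : ∀ a v, 0 ≤ gB a v) (hB1 : ∀ a v, gB a v ≤ 1)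
    (hC0 : ∀ a v, 0 ≤ gC a v) (hC1 : ∀ a v, gC a v ≤ 1)
    (hgA : ∀ a a', a ≠ a' → ∑ v ∈ VA a, gA a' v ≤ η * (pA * Fintype.card ι))
    (hgB : ∀ a a', a ≠ a' → ∑ v ∈ VB a, gB a' v ≤ η * (pB * Fintype.card ι))
    (hgC : ∀ a a', a ≠ a' → ∑ v ∈ VC a, gC a' v ≤ η * (pC * Fintype.card ι))
    {θ : ℝ} (hθ : θ = 4 * (2 * ε + 1024 * η))
    (hunion : (Fintype.card A : ℝ) ^ 2 * Real.exp (-(θ * Fintype.card (B × C) / 2))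
      + (Fintype.card B : ℝ) ^ 2 * Real.exp (-(θ * Fintype.card (A × C) / 2))
      + (Fintype.card C : ℝ) ^ 2 * Real.exp (-(θ * Fintype.card (A × B) / 2)) < 1) :
    ∃ x : A → B → C → ι,
      IsReliable (2 * ε) θ VA gA (fun a (q : B × C) => x a q.1 q.2) ∧
      IsReliable (2 * ε) θ VB gB (fun b (q : A × C) => x q.1 b q.2) ∧
      IsReliable (2 * ε) θ VC gC (fun c (q : A × B) => x q.1 q.2 c) := by
  have hs : 0 < κ / 64 := by positivity
  set w : A × B × C → ι → ℝ := fun m =>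
    selectionWeight (κ / 64) v₀ (VA m.1 ∩ VB m.2.1 ∩ VC m.2.2) with hwdef
  have hw : ∀ m, IsPMF (w m) := fun m => isPMF_selectionWeight hs v₀ _
  have hμ := isPMF_prodWeight hw
  let eB : B × A × C ≃ A × B × C :=
    { toFun := fun q => (q.2.1, q.1, q.2.2), invFun := fun q => (q.2.1, q.1, q.2.2)
      left_inv := fun _ => rfl, right_inv := fun _ => rfl }
  let eC : C × A × B ≃ A × B × C :=
    { toFun := fun q => (q.2.1, q.2.2, q.1), invFun := fun q => (q.2.2, q.1, q.2.1)
      left_inv := fun _ => rfl, right_inv := fun _ => rfl }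
  have hκB : κ = Fintype.card ι * (pB * pA * pC) := by rw [hκ]; ring
  have hκC : κ = Fintype.card ι * (pC * pA * pB) := by rw [hκ]; ring
  have interB : ∀ a b c, VA a ∩ VB b ∩ VC c = VB b ∩ VA a ∩ VC c := fun a b c => by
    rw [inter_comm (VA a)]
  have interC : ∀ a b c, VA a ∩ VB b ∩ VC c = VC c ∩ VA a ∩ VB b := fun a b c => by
    rw [inter_comm, inter_assoc]
  have b0 : probOf (prodWeight w) (fun ω => ∃ m : A × B × C,
      κ / 64 ≤ #(VA m.1 ∩ VB m.2.1 ∩ VC m.2.2) ∧ ω m ∉ VA m.1 ∩ VB m.2.1 ∩ VC m.2.2)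
      ≤ Fintype.card (A × B × C) * 0 := by
    refine probOf_exists_le hμ _ fun m => probOf_prodWeight_le hw m fun ω => ?_
    simp only [Function.update_self, probOf, expectation]
    refine (sum_eq_zero fun v _ => ?_).le
    split_ifs with h
    · simp only [hwdef, selectionWeight, if_pos h.1, if_neg h.2, zero_mul]
    · rw [mul_zero]
  have bA := probOf_exists_lt_sum_le hw (Equiv.refl (A × B × C)) hA0 hA1
    (t := θ * Fintype.card (B × C)) fun a a' h =>
      (sum_expectation_selectionWeight_le hpA hpB hpC hpC1 hε hκ hκ0 hA.2.2 hB hC v₀ a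
        (hA0 a') (hA1 a') (hgA a a' h)).trans_eq (by rw [hθ]; ring)
  have bB := probOf_exists_lt_sum_le hw eB hB0 hB1
    (t := θ * Fintype.card (A × C)) fun a a' h => by
      have := sum_expectation_selectionWeight_le hpB hpA hpC hpC1 hε hκB hκ0 hB.2.2 hA hC v₀ a
        (hB0 a') (hB1 a') (hgB a a' h)
      simp only [← interB] at this
      exact this.trans_eq (by rw [hθ]; ring)
  have bC := probOf_exists_lt_sum_le hw eC hC0 hC1
    (t := θ * Fintype.card (A × B)) fun a a' h => by
      have := sum_expectation_selectionWeight_le hpC hpA hpB hpB1 hε hκC hκ0 hC.2.2 hA hB v₀ a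
        (hC0 a') (hC1 a') (hgC a a' h)
      simp only [← interC] at this
      exact this.trans_eq (by rw [hθ]; ring)
  have hlt := ((probOf_or_le hμ _ _).trans (add_le_add ((probOf_or_le hμ _ _).trans
    (add_le_add ((probOf_or_le hμ _ _).trans (add_le_add b0 bA)) bB)) bC)).trans_lt
      (by rwa [mul_zero, zero_add])
  obtain ⟨ω, hω⟩ := exists_not_of_probOf_lt_one hμ hlt
  push Not at hω
  obtain ⟨⟨⟨hmem, hA'⟩, hB'⟩, hC'⟩ := hω
  refine ⟨fun a b c => ω (a, b, c), ⟨fun a => ?_, fun a a' h => hA' (a, a') h⟩,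
    ⟨fun b => ?_, fun b b' h => hB' (b, b') h⟩, ⟨fun c => ?_, fun c c' h => hC' (c, c') h⟩⟩
  · refine le_trans ?_ (card_small_inter_le hpA hpB hpC hpC1 hε hκ hA.2.2 hB hC a)
    exact_mod_cast card_le_card fun q hq => by
      simp only [mem_filter, mem_univ, true_and] at hq ⊢
      by_contra hc
      have := hmem (a, q.1, q.2) (not_lt.1 hc)
      simp only [mem_inter] at this
      exact hq this.1.1
  · refine le_trans ?_ (card_small_inter_le hpB hpA hpC hpC1 hε hκB hB.2.2 hA hC b)
    exact_mod_cast card_le_card fun q hq => by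
      simp only [mem_filter, mem_univ, true_and] at hq ⊢
      by_contra hc
      rw [← interB] at hc
      have := hmem (q.1, b, q.2) (not_lt.1 hc)
      simp only [mem_inter] at this
      exact hq this.1.2
  · refine le_trans ?_ (card_small_inter_le hpC hpA hpB hpB1 hε hκC hC.2.2 hA hB c)
    exact_mod_cast card_le_card fun q hq => by
      simp only [mem_filter, mem_univ, true_and] at hq ⊢
      by_contra hc
      rw [← interC] at hc
      have := hmem (q.1, q.2, c) (not_lt.1 hc)
      simp only [mem_inter] at this
      exact hq this.2

end Encoder

section Channel

variable {X Y : Type*} [Fintype X] [Fintype Y]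

/-- The outputs whose likelihood under the input `x` exceeds their likelihood under the output
distribution of `P` by a factor greater than `exp (n * I)`. -/
def likelySet (P : X → ℝ) (W : X → Y → ℝ) (I : ℝ) (n : ℕ) (x : Fin n → X) :
    Finset (Fin n → Y) :=
  univ.filter fun y => Real.exp (n * I) * ∏ i, ∑ x', P x' * W x' (y i) < Wn W n x y

omit [Fintype X] in
lemma Wn_nonneg {W : X → Y → ℝ} (hW : IsChannel W) (n : ℕ) (x : Fin n → X)
    (y : Fin n → Y) : 0 ≤ Wn W n x y :=
  prod_nonneg fun _ _ => hW.1 _ _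

omit [Fintype X] in
lemma sum_Wn {W : X → Y → ℝ} (hW : IsChannel W) (n : ℕ) (x : Fin n → X) :
    ∑ y, Wn W n x y = 1 := by
  have h := (Finset.prod_univ_sum (fun _ : Fin n => (univ : Finset Y)) fun i b => W (x i) b)
  rw [Fintype.piFinset_univ] at h
  rw [show (∑ y, Wn W n x y) = ∑ y : Fin n → Y, ∏ i, W (x i) (y i) from rfl, ← h]
  exact prod_eq_one fun i _ => hW.2 _

omit [Fintype X] in
lemma sum_Wn_le_one {W : X → Y → ℝ} (hW : IsChannel W) (n : ℕ) (x : Fin n → X)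
    (D : Finset (Fin n → Y)) : ∑ y ∈ D, Wn W n x y ≤ 1 := by
  rw [← sum_Wn hW n x]
  exact sum_le_univ_sum_of_nonneg fun y => Wn_nonneg hW n x y

lemma expectation_Wn_likelySet_le {P : X → ℝ} {W : X → Y → ℝ} (hW : IsChannel W)
    (I : ℝ) (n : ℕ) (x : Fin n → X) :
    expectation (prodWeight fun _ => P) (fun z => ∑ y ∈ likelySet P W I n x, Wn W n z y)
      ≤ Real.exp (-(n * I)) := by
  have hswap : expectation (prodWeight fun _ => P)
      (fun z => ∑ y ∈ likelySet P W I n x, Wn W n z y)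
      = ∑ y ∈ likelySet P W I n x, ∏ i, ∑ x', P x' * W x' (y i) := by
    rw [expectation_sum]
    exact sum_congr rfl fun y _ =>
      expectation_prodWeight_prod (fun _ => P) fun i b => W b (y i)
  rw [hswap]
  calc _ ≤ ∑ y ∈ likelySet P W I n x, Real.exp (-(n * I)) * Wn W n x y := by
        refine sum_le_sum fun y hy => ?_
        have h := (mem_filter.1 hy).2.le
        calc _ = Real.exp (-(n * I)) * (Real.exp (n * I) * ∏ i, ∑ x', P x' * W x' (y i)) := by
              rw [← mul_assoc, ← Real.exp_add, neg_add_cancel, Real.exp_zero, one_mul]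
          _ ≤ _ := mul_le_mul_of_nonneg_left h (Real.exp_pos _).le
    _ = Real.exp (-(n * I)) * ∑ y ∈ likelySet P W I n x, Wn W n x y := by rw [mul_sum]
    _ ≤ Real.exp (-(n * I)) * 1 :=
        mul_le_mul_of_nonneg_left (sum_Wn_le_one hW n x _) (Real.exp_pos _).le
    _ = _ := mul_one _

/-- The summand of the moment generating function of `I - log (W x y / (P W) y)`. -/
def tilt (P : X → ℝ) (W : X → Y → ℝ) (I θ : ℝ) (x : X) (y : Y) : ℝ :=
  if P x * W x y = 0 then 0
  else P x * W x y * Real.exp (-θ * (Real.log (W x y / ∑ x', P x' * W x' y) - I))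

lemma exists_sum_tilt_lt_one {P : X → ℝ} {W : X → Y → ℝ} (hP : IsPMF P) (hW : IsChannel W)
    {I : ℝ} (hI : I < mutInf P W) : ∃ θ, 0 < θ ∧ ∑ x, ∑ y, tilt P W I θ x y < 1 := by
  have hone : ∑ x, ∑ y, P x * W x y = 1 := by simp only [← mul_sum, hW.2, mul_one, hP.2]
  have h0 : ∑ x, ∑ y, tilt P W I 0 x y = 1 := by
    rw [← hone]
    refine sum_congr rfl fun x _ => sum_congr rfl fun y _ => ?_
    unfold tilt
    split_ifs with h
    · exact h.symm
    · simp
  have hderiv : HasDerivAt (fun θ => ∑ x, ∑ y, tilt P W I θ x y) (-(mutInf P W - I)) 0 := by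
    have : -(mutInf P W - I) = ∑ x, ∑ y, if P x * W x y = 0 then 0 else
        P x * W x y * -(Real.log (W x y / ∑ x', P x' * W x' y) - I) := by
      have hsum : I = ∑ x, ∑ y, P x * W x y * I := by simp only [← sum_mul, hone, one_mul]
      conv_lhs => rw [hsum, mutInf]
      simp only [← sum_sub_distrib, ← sum_neg_distrib]
      refine sum_congr rfl fun x _ => sum_congr rfl fun y _ => ?_
      split_ifs with h
      · rw [h]; ring
      · ring
    rw [this]
    refine HasDerivAt.fun_sum fun x _ => HasDerivAt.fun_sum fun y _ => ?_
    unfold tilt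
    split_ifs with h
    · exact hasDerivAt_const _ _
    · have h1 := (((hasDerivAt_id (0 : ℝ)).neg.mul_const
        (Real.log (W x y / ∑ x', P x' * W x' y) - I)).exp).const_mul (P x * W x y)
      simpa using h1
  have hs := (hasDerivAt_iff_tendsto_slope.1 hderiv).mono_left
    (nhdsWithin_mono (0 : ℝ) fun θ (hθ : θ ∈ Set.Ioi (0 : ℝ)) => (ne_of_gt hθ : θ ≠ 0))
  obtain ⟨θ, hlt, hpos⟩ := ((hs.eventually_lt_const (by linarith : -(mutInf P W - I) < 0)).and
    self_mem_nhdsWithin).exists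
  refine ⟨θ, hpos, ?_⟩
  have hpos' : 0 < θ := hpos
  rw [slope_def_field, h0, sub_zero, div_lt_iff₀ hpos'] at hlt
  linarith

lemma exists_expectation_Wn_compl_likelySet_le {P : X → ℝ} {W : X → Y → ℝ} (hP : IsPMF P)
    (hW : IsChannel W) {I : ℝ} (hI : I < mutInf P W) :
    ∃ c, 0 < c ∧ ∀ n : ℕ, expectation (prodWeight fun _ => P)
      (fun x => ∑ y ∈ (likelySet P W I n x)ᶜ, Wn W n x y) ≤ Real.exp (-(n * c)) := by
  obtain ⟨θ, hθ, hlt⟩ := exists_sum_tilt_lt_one hP hW hI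
  have ht0 : ∀ x y, 0 ≤ tilt P W I θ x y := fun x y => by
    unfold tilt
    split_ifs
    · exact le_rfl
    · exact mul_nonneg (mul_nonneg (hP.1 _) (hW.1 _ _)) (Real.exp_pos _).le
  set δ := max (∑ x, ∑ y, tilt P W I θ x y) (1 / 2) with hδ
  have hδ0 : 0 < δ := lt_max_of_lt_right (by norm_num)
  have hδ1 : δ < 1 := max_lt hlt (by norm_num)
  refine ⟨-Real.log δ, neg_pos.2 (Real.log_neg hδ0 hδ1), fun n => ?_⟩
  have hpt : ∀ (x : Fin n → X) (y : Fin n → Y), y ∈ (likelySet P W I n x)ᶜ →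
      (∏ i, P (x i)) * Wn W n x y ≤ ∏ i, tilt P W I θ (x i) (y i) := by
    intro x y hy
    rw [Wn, ← prod_mul_distrib]
    by_cases hz : ∃ i, P (x i) * W (x i) (y i) = 0
    · obtain ⟨i, hi⟩ := hz
      rw [prod_eq_zero (mem_univ i) hi]
      exact prod_nonneg fun _ _ => ht0 _ _
    · push Not at hz
      have hpos : ∀ i, 0 < P (x i) * W (x i) (y i) := fun i =>
        lt_of_le_of_ne (mul_nonneg (hP.1 _) (hW.1 _ _)) (hz i).symm
      have hWpos : ∀ i, 0 < W (x i) (y i) := fun i =>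
        pos_of_mul_pos_right (hpos i) (hP.1 _)
      have hQpos : ∀ i, 0 < ∑ x', P x' * W x' (y i) := fun i =>
        (hpos i).trans_le (single_le_sum (f := fun x' => P x' * W x' (y i))
          (fun x' _ => mul_nonneg (hP.1 _) (hW.1 _ _)) (mem_univ (x i)))
      have hle : ∏ i, W (x i) (y i) ≤ Real.exp (n * I) * ∏ i, ∑ x', P x' * W x' (y i) := by
        by_contra hlt
        exact mem_compl.1 hy (mem_filter.2 ⟨mem_univ _, not_le.1 hlt⟩)
      have hlog : ∑ i, (Real.log (W (x i) (y i) / ∑ x', P x' * W x' (y i)) - I) ≤ 0 := by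
        rw [sum_sub_distrib, ← Real.log_prod fun i _ => (div_pos (hWpos i) (hQpos i)).ne',
          prod_div_distrib, sum_const, card_univ, Fintype.card_fin, nsmul_eq_mul, sub_nonpos,
          Real.log_le_iff_le_exp (div_pos (prod_pos fun i _ => hWpos i)
            (prod_pos fun i _ => hQpos i)), div_le_iff₀ (prod_pos fun i _ => hQpos i)]
        exact hle
      have ht : ∏ i, tilt P W I θ (x i) (y i) = (∏ i, P (x i) * W (x i) (y i)) *
          Real.exp (-θ * ∑ i, (Real.log (W (x i) (y i) / ∑ x', P x' * W x' (y i)) - I)) := by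
        rw [mul_sum, Real.exp_sum, ← prod_mul_distrib]
        exact prod_congr rfl fun i _ => by rw [tilt, if_neg (hz i)]
      rw [ht]
      refine le_mul_of_one_le_right (prod_nonneg fun i _ => (hpos i).le) (Real.one_le_exp ?_)
      nlinarith
  calc expectation (prodWeight fun _ => P)
        (fun x => ∑ y ∈ (likelySet P W I n x)ᶜ, Wn W n x y)
      ≤ ∑ x : Fin n → X, ∑ y : Fin n → Y, ∏ i, tilt P W I θ (x i) (y i) := by
        refine sum_le_sum fun x _ => ?_
        rw [mul_sum]
        exact (sum_le_sum fun y hy => hpt x y hy).trans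
          (sum_le_univ_sum_of_nonneg fun y => prod_nonneg fun _ _ => ht0 _ _)
    _ = (∑ x, ∑ y, tilt P W I θ x y) ^ n := by
        have h1 := Finset.prod_univ_sum (fun _ : Fin n => (univ : Finset X))
          fun _ a => ∑ y, tilt P W I θ a y
        rw [Fintype.piFinset_univ, prod_const, card_univ, Fintype.card_fin] at h1
        rw [h1]
        refine sum_congr rfl fun x _ => ?_
        have h2 := Finset.prod_univ_sum (fun _ : Fin n => (univ : Finset Y))
          fun i b => tilt P W I θ (x i) b
        rw [Fintype.piFinset_univ] at h2
        exact h2.symm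
    _ ≤ δ ^ n := pow_le_pow_left₀ (sum_nonneg fun _ _ => sum_nonneg fun _ _ => ht0 _ _)
        (le_max_left _ _) n
    _ = _ := by
        rw [mul_neg, neg_neg, mul_comm, Real.exp_mul, Real.exp_log hδ0, Real.rpow_natCast]

end Channel

/-- Random selection with expurgation: a list of `N` points with small cost under each of three
criteria and small total interference of each point with the others. -/
lemma exists_pool {Z : Type*} [Fintype Z] {μ : Z → ℝ} (hμ : IsPMF μ) {δ β : Fin 3 → ℝ}
    (hδ : ∀ k, 0 < δ k) (hβ : ∀ k, 0 < β k) {e : Fin 3 → Z → ℝ} {G : Fin 3 → Z → Z → ℝ}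
    (he0 : ∀ k z, 0 ≤ e k z) (hG0 : ∀ k z z', 0 ≤ G k z z')
    (he : ∀ k, expectation μ (e k) ≤ δ k) (hG : ∀ k z, expectation μ (G k z) ≤ β k)
    {N : ℕ} (hN : 0 < N) :
    ∃ u : Fin N → Z, ∀ k v, e k (u v) ≤ 12 * δ k ∧
      ∑ v' ∈ univ.erase v, G k (u v) (u v') ≤ 24 * N * β k := by
  set M := 2 * N
  have hM : (M : ℝ) = 2 * N := by simp [M]
  have hN' : (0 : ℝ) < N := by exact_mod_cast hN
  have hM0 : (0 : ℝ) < M := by rw [hM]; positivity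
  have hw : ∀ _ : Fin M, IsPMF μ := fun _ => hμ
  set Φ : (Fin M → Z) → Fin M → ℝ := fun ω v =>
    ∑ k, ((δ k)⁻¹ * e k (ω v) + (M * β k)⁻¹ * ∑ v' ∈ univ.erase v, G k (ω v) (ω v')) with hΦ
  have hterm0 : ∀ (ω : Fin M → Z) v k, 0 ≤ (δ k)⁻¹ * e k (ω v) ∧
      0 ≤ (M * β k)⁻¹ * ∑ v' ∈ univ.erase v, G k (ω v) (ω v') := fun ω v k =>
    ⟨mul_nonneg (inv_nonneg.2 (hδ k).le) (he0 _ _),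
      mul_nonneg (inv_nonneg.2 (mul_pos hM0 (hβ k)).le) (sum_nonneg fun _ _ => hG0 _ _ _)⟩
  have hmean : ∀ v, expectation (prodWeight fun _ : Fin M => μ) (fun ω => Φ ω v) ≤ 6 := by
    intro v
    rw [expectation_sum]
    have hk : ∀ k, expectation (prodWeight fun _ : Fin M => μ) (fun ω => (δ k)⁻¹ * e k (ω v) +
        (M * β k)⁻¹ * ∑ v' ∈ univ.erase v, G k (ω v) (ω v')) ≤ 2 := by
      intro k
      rw [expectation_add, expectation_const_mul, expectation_const_mul, expectation_sum]
      have h1 : expectation (prodWeight fun _ : Fin M => μ) (fun ω => e k (ω v)) ≤ δ k :=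
        expectation_prodWeight_le hw v fun ω => by
          simpa only [Function.update_self] using he k
      have h2 : ∑ v' ∈ univ.erase v, expectation (prodWeight fun _ : Fin M => μ)
          (fun ω => G k (ω v) (ω v')) ≤ M * β k := by
        calc _ ≤ ∑ v' ∈ univ.erase v, β k := sum_le_sum fun v' hv' =>
              expectation_prodWeight_le hw v' fun ω => by
                simpa only [Function.update_self,
                  Function.update_of_ne (ne_of_mem_erase hv').symm] using hG k (ω v)
          _ ≤ ∑ _v' : Fin M, β k := sum_le_univ_sum_of_nonneg fun _ => (hβ k).le
          _ = _ := by simp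
      have h3 : (δ k)⁻¹ * expectation (prodWeight fun _ : Fin M => μ) (fun ω => e k (ω v)) ≤ 1 := by
        rw [inv_mul_le_iff₀ (hδ k), mul_one]; exact h1
      have h4 : (M * β k)⁻¹ * ∑ v' ∈ univ.erase v, expectation (prodWeight fun _ : Fin M => μ)
          (fun ω => G k (ω v) (ω v')) ≤ 1 := by
        rw [inv_mul_le_iff₀ (mul_pos hM0 (hβ k)), mul_one]; exact h2
      linarith
    calc _ ≤ ∑ _k : Fin 3, (2 : ℝ) := sum_le_sum fun k _ => hk k
      _ = 6 := by norm_num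
  obtain ⟨ω, hω⟩ := exists_le_expectation (isPMF_prodWeight hw) (F := fun ω => ∑ v, Φ ω v)
    (c := M * 6) (by
      rw [expectation_sum]
      calc _ ≤ ∑ _v : Fin M, (6 : ℝ) := sum_le_sum fun v _ => hmean v
        _ = _ := by simp)
  have hΦ0 : ∀ v, 0 ≤ Φ ω v := fun v =>
    sum_nonneg fun k _ => add_nonneg (hterm0 ω v k).1 (hterm0 ω v k).2
  have hcard : N ≤ #{v | Φ ω v ≤ 12} := by
    have hsplit := card_filter_add_card_filter_not (s := (univ : Finset (Fin M)))
      (fun v => Φ ω v ≤ 12)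
    rw [card_univ, Fintype.card_fin] at hsplit
    have hbad : (#{v | ¬ Φ ω v ≤ 12} : ℝ) * 12 ≤ M * 6 := by
      calc _ = ∑ v with ¬ Φ ω v ≤ 12, (12 : ℝ) := by rw [sum_const, nsmul_eq_mul]
        _ ≤ ∑ v with ¬ Φ ω v ≤ 12, Φ ω v :=
            sum_le_sum fun v hv => (not_le.1 (mem_filter.1 hv).2).le
        _ ≤ ∑ v, Φ ω v := sum_le_univ_sum_of_nonneg hΦ0
        _ ≤ _ := hω
    have : #{v | ¬ Φ ω v ≤ 12} ≤ N := by
      rw [hM] at hbad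
      have : (#{v | ¬ Φ ω v ≤ 12} : ℝ) ≤ N := by linarith
      exact_mod_cast this
    omega
  set f := Finset.orderEmbOfCardLe _ hcard
  refine ⟨fun v => ω (f v), fun k v => ?_⟩
  have hgood : Φ ω (f v) ≤ 12 := (mem_filter.1 (Finset.orderEmbOfCardLe_mem _ hcard v)).2
  have hk : (δ k)⁻¹ * e k (ω (f v)) +
      (M * β k)⁻¹ * ∑ v' ∈ univ.erase (f v), G k (ω (f v)) (ω v') ≤ 12 :=
    (single_le_sum (f := fun k => (δ k)⁻¹ * e k (ω (f v)) +
      (M * β k)⁻¹ * ∑ v' ∈ univ.erase (f v), G k (ω (f v)) (ω v'))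
      (fun k _ => add_nonneg (hterm0 ω _ k).1 (hterm0 ω _ k).2) (mem_univ k)).trans hgood
  constructor
  · have : (δ k)⁻¹ * e k (ω (f v)) ≤ 12 := by linarith [(hterm0 ω (f v) k).2]
    rw [inv_mul_le_iff₀ (hδ k)] at this
    linarith
  · have : (M * β k)⁻¹ * ∑ v' ∈ univ.erase (f v), G k (ω (f v)) (ω v') ≤ 12 := by
      linarith [(hterm0 ω (f v) k).1]
    rw [inv_mul_le_iff₀ (mul_pos hM0 (hβ k)), hM] at this
    calc ∑ v' ∈ univ.erase v, G k (ω (f v)) (ω (f v'))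
        = ∑ v' ∈ (univ.erase v).map f.toEmbedding, G k (ω (f v)) (ω v') := by
          rw [sum_map]; rfl
      _ ≤ ∑ v' ∈ univ.erase (f v), G k (ω (f v)) (ω v') := by
          refine sum_le_sum_of_subset_of_nonneg (fun z hz => ?_) fun _ _ _ => hG0 _ _ _
          obtain ⟨v', hv', rfl⟩ := mem_map.1 hz
          exact mem_erase.2 ⟨fun h => ne_of_mem_erase hv' (f.injective h), mem_univ _⟩
      _ ≤ _ := by linarith

section Interference

variable {X Y : Type*} [Fintype Y] {ι : Type*} [DecidableEq ι]

/-- The probability that the output lies in the union of the decoding sets of the points in `V`,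
when the point `v` of the list `u` is sent. -/
def hitProb (W : X → Y → ℝ) {n : ℕ} (u : ι → Fin n → X)
    (T : (Fin n → X) → Finset (Fin n → Y)) (V : Finset ι) (v : ι) : ℝ :=
  ∑ y ∈ V.biUnion fun v' => T (u v'), Wn W n (u v) y

variable {W : X → Y → ℝ} {n : ℕ} {u : ι → Fin n → X} {T : (Fin n → X) → Finset (Fin n → Y)}

omit [DecidableEq ι] in
lemma hitProb_nonneg (hW : IsChannel W) (V : Finset ι) (v : ι) : 0 ≤ hitProb W u T V v :=
  sum_nonneg fun _ _ => Wn_nonneg hW _ _ _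

omit [DecidableEq ι] in
lemma hitProb_le_one (hW : IsChannel W) (V : Finset ι) (v : ι) : hitProb W u T V v ≤ 1 :=
  sum_Wn_le_one hW _ _ _

omit [DecidableEq ι] in
lemma hitProb_le_sum (hW : IsChannel W) (V : Finset ι) (v : ι) :
    hitProb W u T V v ≤ ∑ v' ∈ V, ∑ y ∈ T (u v'), Wn W n (u v) y := by
  induction V using Finset.induction_on with
  | empty => simp [hitProb]
  | insert a s ha ih =>
    rw [sum_insert ha, hitProb, biUnion_insert]
    calc _ ≤ ∑ y ∈ T (u a), Wn W n (u v) y + ∑ y ∈ s.biUnion fun v' => T (u v'),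
          Wn W n (u v) y := by
          rw [← sum_union_inter]
          exact le_add_of_nonneg_right (sum_nonneg fun _ _ => Wn_nonneg hW _ _ _)
      _ ≤ _ := by gcongr; exact ih

lemma sum_hitProb_le [Fintype ι] (hW : IsChannel W) {γ : ℝ}
    (hγ : ∀ v', ∑ v ∈ univ.erase v', ∑ y ∈ T (u v'), Wn W n (u v) y ≤ γ) (V : Finset ι) :
    ∑ v, hitProb W u T V v ≤ #V * (1 + γ) := by
  calc ∑ v, hitProb W u T V v
      ≤ ∑ v, ∑ v' ∈ V, if v = v' then 1 else ∑ y ∈ T (u v'), Wn W n (u v) y := by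
        refine sum_le_sum fun v _ => ?_
        have h0 : ∀ v' ∈ V, (0 : ℝ) ≤ if v = v' then 1 else ∑ y ∈ T (u v'), Wn W n (u v) y :=
          fun v' _ => by
            split_ifs
            · exact zero_le_one
            · exact sum_nonneg fun _ _ => Wn_nonneg hW _ _ _
        by_cases hv : v ∈ V
        · refine (hitProb_le_one hW V v).trans (le_trans ?_ (single_le_sum h0 hv))
          rw [if_pos rfl]
        · refine (hitProb_le_sum hW V v).trans_eq (sum_congr rfl fun v' hv' => ?_)
          rw [if_neg fun h : v = v' => hv (h ▸ hv')]
    _ = ∑ v' ∈ V, (1 + ∑ v ∈ univ.erase v', ∑ y ∈ T (u v'), Wn W n (u v) y) := by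
        rw [sum_comm]
        refine sum_congr rfl fun v' _ => ?_
        rw [← add_sum_erase _ _ (mem_univ v'), if_pos rfl]
        exact congrArg _ (sum_congr rfl fun v hv => if_neg (ne_of_mem_erase hv))
    _ ≤ ∑ v' ∈ V, (1 + γ) := sum_le_sum fun v' _ => by linarith [hγ v']
    _ = _ := by rw [sum_const, nsmul_eq_mul]

lemma idCodeErr_of_isReliable [Fintype X] {M Q : Type*} [Fintype Q] [Nonempty Q]
    (hW : IsChannel W) {e ε θ l : ℝ} (he : ∀ v, ∑ y ∈ (T (u v))ᶜ, Wn W n (u v) y ≤ e)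
    {V : M → Finset ι} {x : M → Q → ι} (hx : IsReliable ε θ V (fun a => hitProb W u T (V a)) x)
    (hl : e + ε ≤ l) (hθ : θ ≤ l) :
    IDCodeErr n W (fun a z => (Fintype.card Q : ℝ)⁻¹ * ∑ q, if z = u (x a q) then 1 else 0)
      (fun a => (V a).biUnion fun v => T (u v)) l l := by
  have hQ : (0 : ℝ) < Fintype.card Q := by exact_mod_cast Fintype.card_pos
  have hmix : ∀ a (D : Finset (Fin n → Y)), ∑ z, ((Fintype.card Q : ℝ)⁻¹ *
      ∑ q, if z = u (x a q) then 1 else 0) * ∑ y ∈ D, Wn W n z y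
      = (Fintype.card Q : ℝ)⁻¹ * ∑ q, ∑ y ∈ D, Wn W n (u (x a q)) y := by
    intro a D
    simp_rw [mul_assoc, ← mul_sum, sum_mul]
    rw [sum_comm]
    simp
  have he0 : ∀ v, 0 ≤ ∑ y ∈ (T (u v))ᶜ, Wn W n (u v) y := fun v =>
    sum_nonneg fun _ _ => Wn_nonneg hW _ _ _
  refine ⟨fun a => ?_, fun a a' h => ?_⟩
  · rw [hmix, inv_mul_le_iff₀ hQ]
    calc _ ≤ ∑ q, (e + if x a q ∉ V a then 1 else 0) := by
          refine sum_le_sum fun q _ => ?_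
          by_cases hq : x a q ∈ V a
          · rw [if_neg (not_not.2 hq), add_zero]
            refine (sum_le_sum_of_subset_of_nonneg (compl_subset_compl.2
              (subset_biUnion_of_mem (fun v => T (u v)) hq))
              fun _ _ _ => Wn_nonneg hW _ _ _).trans (he _)
          · rw [if_pos hq]
            linarith [sum_Wn_le_one hW n (u (x a q)) ((V a).biUnion fun v => T (u v))ᶜ,
              (he0 (x a q)).trans (he _)]
      _ = Fintype.card Q * e + #{q | x a q ∉ V a} := by
          rw [sum_add_distrib, sum_const, nsmul_eq_mul, card_univ, sum_boole]
      _ ≤ Fintype.card Q * (e + ε) := by linarith [hx.1 a]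
      _ ≤ _ := by gcongr
  · rw [hmix, inv_mul_le_iff₀ hQ]
    calc _ ≤ θ * Fintype.card Q := hx.2 a a' h
      _ ≤ _ := by rw [mul_comm]; gcongr

end Interference

section Marginal

variable {X Y1 Y2 Y3 : Type*} [Fintype Y1] [Fintype Y2] [Fintype Y3]
  {W : X → Y1 → Y2 → Y3 → ℝ}

lemma IsBC3.isChannel_marg1 (hW : IsBC3 W) : IsChannel (marg1 W) :=
  ⟨fun x _ => sum_nonneg fun _ _ => sum_nonneg fun _ _ => hW.1 x _ _ _, hW.2⟩

lemma IsBC3.isChannel_marg2 (hW : IsBC3 W) : IsChannel (marg2 W) :=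
  ⟨fun x _ => sum_nonneg fun _ _ => sum_nonneg fun _ _ => hW.1 x _ _ _, fun x => by
    rw [← hW.2 x, sum_comm]; rfl⟩

lemma IsBC3.isChannel_marg3 (hW : IsBC3 W) : IsChannel (marg3 W) :=
  ⟨fun x _ => sum_nonneg fun _ _ => sum_nonneg fun _ _ => hW.1 x _ _ _, fun x => by
    rw [← hW.2 x]
    unfold marg3
    rw [sum_comm]
    exact sum_congr rfl fun _ _ => sum_comm⟩

end Marginal

section Parameters

lemma exists_rate_parameters {R I : Fin 3 → ℝ} (hR0 : ∀ k, 0 < R k) (hRI : ∀ k, R k < I k)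
    (hsum : ∀ k, R k + I k < ∑ l, I l) :
    ∃ (ρ α : ℝ) (r J : Fin 3 → ℝ), 0 < α ∧ (∀ k, R k + α < r k ∧ r k + α < ρ ∧ r k + α < J k ∧
      J k < I k) ∧ α < ∑ k, r k - 2 * ρ := by
  obtain ⟨a, ha⟩ := Finite.exists_max R
  have hD : 2 * R a < ∑ k, min (I k) (R a) := by
    have h0 := hRI 0
    have h1 := hRI 1
    have h2 := hRI 2
    have g0 := hR0 0
    have g1 := hR0 1
    have g2 := hR0 2
    have hs := hsum a
    have haI := hRI a
    rw [Fin.sum_univ_three] at hs ⊢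
    fin_cases a <;> simp only [Fin.mk_zero, Fin.mk_one, Fin.reduceFinMk] at * <;>
      rcases min_cases (I 0) (R _) with ⟨e0, _⟩ | ⟨e0, _⟩ <;>
      rcases min_cases (I 1) (R _) with ⟨e1, _⟩ | ⟨e1, _⟩ <;>
      rcases min_cases (I 2) (R _) with ⟨e2, _⟩ | ⟨e2, _⟩ <;>
      rw [e0, e1, e2] <;> linarith
  obtain ⟨b, hb⟩ := Finite.exists_min fun k => I k - R k
  obtain ⟨η, hη0, hη⟩ := exists_between (lt_min (div_pos (sub_pos.2 hD) (by norm_num : (0 : ℝ) < 15))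
    (div_pos (sub_pos.2 (hRI b)) (by norm_num : (0 : ℝ) < 3)))
  rw [lt_min_iff, lt_div_iff₀ (by norm_num), lt_div_iff₀ (by norm_num)] at hη
  refine ⟨R a + 4 * η, η / 2, fun k => min (I k) (R a + 4 * η) - 2 * η, fun k => I k - η,
    by linarith, fun k => ⟨?_, ?_, ?_, by linarith⟩, ?_⟩
  · have := hb k
    have := ha k
    rw [lt_sub_iff_add_lt, lt_min_iff]
    constructor <;> linarith
  · linarith [min_le_right (I k) (R a + 4 * η)]
  · linarith [min_le_left (I k) (R a + 4 * η)]
  · have h : ∑ k, min (I k) (R a) ≤ ∑ k, min (I k) (R a + 4 * η) :=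
      sum_le_sum fun k _ => min_le_min le_rfl (by linarith)
    simp only [sum_sub_distrib, sum_const, card_univ, Fintype.card_fin, nsmul_eq_mul]
    push_cast
    linarith

open Filter in
lemma eventually_const_mul_exp_le {a b : ℝ} (hab : a < b) (C : ℝ) :
    ∀ᶠ n : ℕ in atTop, C * Real.exp (n * a) ≤ Real.exp (n * b) := by
  have h : Tendsto (fun n : ℕ => Real.exp (n * (b - a))) atTop atTop :=
    Real.tendsto_exp_atTop.comp
      (tendsto_natCast_atTop_atTop.atTop_mul_const (sub_pos.2 hab))
  filter_upwards [h.eventually_ge_atTop C] with n hn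
  calc _ ≤ Real.exp (n * (b - a)) * Real.exp (n * a) := by gcongr
    _ = _ := by rw [← Real.exp_add]; ring_nf

open Filter in
lemma eventually_mul_exp_le_exp_exp {R : ℝ} (hR : 0 < R) (c : ℝ) :
    ∀ᶠ n : ℕ in atTop, 8 * Real.exp (n * c) ≤ Real.exp (Real.exp (n * R)) := by
  filter_upwards [eventually_const_mul_exp_le (half_lt_self hR) (2 * |c| / R + 7)] with n hn
  have h8 : (8 : ℝ) ≤ Real.exp 7 := by linarith [Real.add_one_le_exp (7 : ℝ)]
  have h1 := Real.add_one_le_exp (n * (R / 2))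
  have h2 := Real.one_le_exp (x := n * (R / 2)) (by positivity)
  have hc : n * c ≤ 2 * |c| / R * (n * (R / 2)) := by
    calc n * c ≤ n * |c| := by gcongr; exact le_abs_self c
      _ = _ := by field_simp
  calc 8 * Real.exp (n * c) ≤ Real.exp 7 * Real.exp (n * c) := by gcongr
    _ = Real.exp (7 + n * c) := (Real.exp_add _ _).symm
    _ ≤ _ := by
      refine Real.exp_le_exp.2 (le_trans ?_ hn)
      have : 2 * |c| / R * (n * (R / 2)) ≤ 2 * |c| / R * Real.exp (n * (R / 2)) := by
        gcongr; linarith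
      linarith

lemma exp_neg_two_lt : Real.exp (-2) < 1 / 5 := by
  rw [Real.exp_neg, ← one_div, one_div_lt_one_div (Real.exp_pos _) (by norm_num)]
  have h := Real.exp_one_gt_d9
  have h2 : Real.exp 2 = Real.exp 1 * Real.exp 1 := by rw [← Real.exp_add]; norm_num
  nlinarith

/-- The number of points in the list of codewords. -/
def poolSize (ρ : ℝ) (n : ℕ) : ℕ := ⌈Real.exp (n * ρ)⌉₊

/-- The number of messages for rate `R`. -/
def messageCount (R : ℝ) (n : ℕ) : ℕ := ⌈Real.exp (Real.exp (n * R))⌉₊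

lemma le_poolSize (ρ : ℝ) (n : ℕ) : Real.exp (n * ρ) ≤ poolSize ρ n := Nat.le_ceil _

lemma poolSize_pos (ρ : ℝ) (n : ℕ) : 0 < poolSize ρ n := Nat.ceil_pos.2 (Real.exp_pos _)

lemma poolSize_le {ρ : ℝ} (hρ : 0 ≤ ρ) (n : ℕ) : (poolSize ρ n : ℝ) ≤ 2 * Real.exp (n * ρ) := by
  have h1 := Real.one_le_exp (x := n * ρ) (by positivity)
  have h2 := (Nat.ceil_lt_add_one (Real.exp_pos (n * ρ)).le).le
  unfold poolSize
  linarith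

lemma le_messageCount (R : ℝ) (n : ℕ) : Real.exp (Real.exp (n * R)) ≤ messageCount R n :=
  Nat.le_ceil _

lemma messageCount_pos (R : ℝ) (n : ℕ) : 0 < messageCount R n := Nat.ceil_pos.2 (Real.exp_pos _)

lemma messageCount_le {R : ℝ} (hR : 0 ≤ R) (n : ℕ) :
    (messageCount R n : ℝ) ≤ Real.exp (2 * Real.exp (n * R)) := by
  have h1 := Real.one_le_exp (x := n * R) (by positivity)
  have h2 := Real.add_one_le_exp (Real.exp (n * R))
  have h3 := (Nat.ceil_lt_add_one (Real.exp_pos (Real.exp (n * R))).le).le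
  rw [two_mul, Real.exp_add]
  unfold messageCount
  nlinarith

lemma le_log_log_messageCount (R : ℝ) {n : ℕ} (hn : 0 < n) :
    R ≤ 1 / n * Real.log (Real.log (messageCount R n)) := by
  have hn' : (0 : ℝ) < n := by exact_mod_cast hn
  have h1 : Real.exp (n * R) ≤ Real.log (messageCount R n) :=
    (Real.le_log_iff_exp_le (by exact_mod_cast messageCount_pos R n)).2 (le_messageCount R n)
  have h2 := (Real.le_log_iff_exp_le ((Real.exp_pos _).trans_le h1)).2 h1
  rw [one_div, le_inv_mul_iff₀ hn']
  exact h2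

open Filter in
lemma eventually_union_lt_one {R r ρ α : ℝ} (hR : 0 < R) (hα : 0 < α) (hRr : R + α < r)
    (hrρ : r + α < ρ) :
    ∀ᶠ n : ℕ in atTop,
      (messageCount R n : ℝ) ^ 2 * Real.exp (-(Real.exp (-(n * α)) *
          (Real.exp (-(n * (ρ - r))) * poolSize ρ n) / 2))
      + messageCount R n * Real.exp (-(2 * (Real.exp (-(n * (ρ - r))) * poolSize ρ n)))
      + 2 ^ poolSize ρ n * Real.exp (-(Real.exp (-(n * α)) * messageCount R n / 2))
      + poolSize ρ n * Real.exp (-(2 * (Real.exp (-(n * (ρ - r))) * messageCount R n)))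
      + messageCount R n * Real.exp (-(Real.exp (-(n * (ρ - r))) * poolSize ρ n / 4)) < 1 := by
  filter_upwards [eventually_const_mul_exp_le (show R < r - α by linarith) 16,
    eventually_mul_exp_le_exp_exp hR (ρ + α), eventually_mul_exp_le_exp_exp hR (2 * ρ - r)]
    with n h1 h2 h3
  have hρ : 0 ≤ ρ := by linarith
  set E := Real.exp (n * R) with hE
  set K : ℝ := (messageCount R n : ℝ)
  set N : ℝ := (poolSize ρ n : ℝ) with hN
  set p := Real.exp (-(n * (ρ - r))) with hp
  set ε := Real.exp (-(n * α)) with hε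
  have hE1 : 1 ≤ E := Real.one_le_exp (by positivity)
  have hS1 : 1 ≤ Real.exp (n * ρ) := Real.one_le_exp (by positivity)
  have hK0 : 0 ≤ K := Nat.cast_nonneg _
  have hK : K ≤ Real.exp (2 * E) := messageCount_le hR.le n
  have hK' : Real.exp E ≤ K := le_messageCount R n
  have hN' : N ≤ 2 * Real.exp (n * ρ) := poolSize_le hρ n
  have hε1 : ε ≤ 1 := Real.exp_le_one_iff.2 (neg_nonpos.2 (by positivity))
  have hε0 : 0 < ε := Real.exp_pos _
  have hp0 : 0 < p := Real.exp_pos _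
  have hpN : Real.exp (n * r) ≤ p * N := by
    calc _ = p * Real.exp (n * ρ) := by rw [hp, ← Real.exp_add]; ring_nf
      _ ≤ _ := by gcongr; exact le_poolSize ρ n
  have hεpN : 16 * E ≤ ε * (p * N) := by
    calc _ ≤ _ := h1
      _ = ε * Real.exp (n * r) := by rw [hε, ← Real.exp_add]; ring_nf
      _ ≤ _ := by gcongr
  have hpN16 : 16 * E ≤ p * N := hεpN.trans (mul_le_of_le_one_left (by positivity) hε1)
  have hεK : 8 * Real.exp (n * ρ) ≤ ε * K := by
    calc _ = ε * (8 * Real.exp (n * (ρ + α))) := by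
          rw [mul_left_comm, hε, ← Real.exp_add]; ring_nf
      _ ≤ _ := by gcongr; exact h2.trans hK'
  have hpK : 8 * Real.exp (n * ρ) ≤ p * K := by
    calc _ = p * (8 * Real.exp (n * (2 * ρ - r))) := by
          rw [mul_left_comm, hp, ← Real.exp_add]; ring_nf
      _ ≤ _ := by gcongr; exact h3.trans hK'
  have key : ∀ {A x y : ℝ}, A ≤ Real.exp x → x + y ≤ -2 → A * Real.exp y ≤ Real.exp (-2) := by
    intro A x y hA hxy
    calc _ ≤ Real.exp x * Real.exp y := by gcongr
      _ = Real.exp (x + y) := (Real.exp_add _ _).symm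
      _ ≤ _ := Real.exp_le_exp.2 hxy
  have hK2 : K ^ 2 ≤ Real.exp (4 * E) := by
    calc _ ≤ Real.exp (2 * E) ^ 2 := by gcongr
      _ = _ := by rw [← Real.exp_nat_mul]; push_cast; ring_nf
  have h2N : (2 : ℝ) ^ poolSize ρ n ≤ Real.exp N := by
    calc _ ≤ Real.exp 1 ^ poolSize ρ n := by
          gcongr; linarith [Real.add_one_le_exp (1 : ℝ)]
      _ = _ := by rw [← Real.exp_nat_mul, mul_one]
  have hNexp : N ≤ Real.exp N := by linarith [Real.add_one_le_exp N]
  have b1 := key (y := -(ε * (p * N) / 2)) hK2 (by linarith)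
  have b2 := key (y := -(2 * (p * N))) hK (by linarith)
  have b3 := key (y := -(ε * K / 2)) h2N (by linarith)
  have b4 := key (y := -(2 * (p * K))) hNexp (by linarith)
  have b5 := key (y := -(p * N / 4)) hK (by linarith)
  linarith [exp_neg_two_lt]

open Filter in
lemma eventually_density_le {r ρ J α : ℝ} (hρ : 0 ≤ ρ) (hrρ : r + α < ρ) (hrJ : r + α < J) :
    ∀ᶠ n : ℕ in atTop, 16 * Real.exp (-(n * (ρ - r))) *
      (1 + 24 * poolSize ρ n * Real.exp (-(n * J))) ≤ Real.exp (-(n * α)) := by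
  filter_upwards [eventually_const_mul_exp_le (show r - ρ < -α by linarith) 32,
    eventually_const_mul_exp_le (show r - J < -α by linarith) 1536] with n h1 h2
  have hN := poolSize_le hρ n
  have e1 : Real.exp (-(n * (ρ - r))) = Real.exp (n * (r - ρ)) := by ring_nf
  have e2 : Real.exp (n * (r - ρ)) * Real.exp (n * ρ) * Real.exp (-(n * J))
      = Real.exp (n * (r - J)) := by
    rw [← Real.exp_add, ← Real.exp_add]; ring_nf
  calc _ ≤ 16 * Real.exp (-(n * (ρ - r))) *
        (1 + 24 * (2 * Real.exp (n * ρ)) * Real.exp (-(n * J))) := by gcongr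
    _ = 16 * Real.exp (n * (r - ρ)) + 768 * Real.exp (n * (r - J)) := by
        rw [← e2, e1]; ring
    _ ≤ Real.exp (n * -α) := by linarith
    _ = _ := by rw [mul_neg]

open Filter in
lemma eventually_exp_neg_poolSize_le {r : Fin 3 → ℝ} {ρ α : ℝ} (hα : 0 < α)
    (hr : α < ∑ k, r k - 2 * ρ) :
    ∀ᶠ n : ℕ in atTop, Real.exp (-(poolSize ρ n * (Real.exp (-(n * (ρ - r 0))) *
      Real.exp (-(n * (ρ - r 1))) * Real.exp (-(n * (ρ - r 2)))) / 64))
      ≤ Real.exp (-(n * α)) / 4 := by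
  filter_upwards [eventually_const_mul_exp_le hr 192] with n h1
  set κ := poolSize ρ n * (Real.exp (-(n * (ρ - r 0))) *
      Real.exp (-(n * (ρ - r 1))) * Real.exp (-(n * (ρ - r 2))))
  have hκ : Real.exp (n * (∑ k, r k - 2 * ρ)) ≤ κ := by
    calc _ = Real.exp (n * ρ) * (Real.exp (-(n * (ρ - r 0))) *
          Real.exp (-(n * (ρ - r 1))) * Real.exp (-(n * (ρ - r 2)))) := by
          rw [← Real.exp_add, ← Real.exp_add, ← Real.exp_add, Fin.sum_univ_three]; ring_nf
      _ ≤ _ := mul_le_mul_of_nonneg_right (le_poolSize ρ n) (by positivity)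
  have h2 := Real.add_one_le_exp (n * α)
  have h3 := Real.one_le_exp (x := n * α) (by positivity)
  have h4 : 4 ≤ Real.exp 3 := by linarith [Real.add_one_le_exp (3 : ℝ)]
  rw [le_div_iff₀ (by norm_num)]
  calc _ ≤ Real.exp (-(κ / 64)) * Real.exp 3 := by gcongr
    _ = Real.exp (-(κ / 64) + 3) := (Real.exp_add _ _).symm
    _ ≤ _ := Real.exp_le_exp.2 (by linarith)

open Filter in
lemma eventually_encoder_union_lt {R R' α : ℝ} (hR : 0 < R) (hR' : 0 < R') :
    ∀ᶠ n : ℕ in atTop, ∀ m : ℕ, messageCount R' n ≤ m →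
      (messageCount R n : ℝ) ^ 2 * Real.exp (-(4 * (2 * Real.exp (-(n * α)) +
        1024 * Real.exp (-(n * α))) * m / 2)) < 1 / 5 := by
  filter_upwards [eventually_mul_exp_le_exp_exp hR' (R + α)] with n h1 m hm
  have hm' : (messageCount R' n : ℝ) ≤ m := by exact_mod_cast hm
  set E := Real.exp (n * R) with hE
  have hE1 : 1 ≤ E := Real.one_le_exp (by positivity)
  have hεm : 8 * E ≤ Real.exp (-(n * α)) * m := by
    calc _ = Real.exp (-(n * α)) * (8 * Real.exp (n * (R + α))) := by
          rw [mul_left_comm, ← Real.exp_add, hE]; ring_nf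
      _ ≤ _ := by gcongr; exact h1.trans ((le_messageCount R' n).trans hm')
  calc _ ≤ Real.exp (2 * E) ^ 2 * Real.exp (-(4 * (2 * Real.exp (-(n * α)) +
        1024 * Real.exp (-(n * α))) * m / 2)) := by gcongr; exact messageCount_le hR.le n
    _ = Real.exp (4 * E + -(4 * (2 * Real.exp (-(n * α)) +
        1024 * Real.exp (-(n * α))) * m / 2)) := by
        rw [← Real.exp_nat_mul, Real.exp_add]; push_cast; ring_nf
    _ ≤ Real.exp (-2) := Real.exp_le_exp.2 (by linarith)
    _ < _ := exp_neg_two_lt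

end Parameters

section Code

variable {X Y : Type*} [Fintype Y]

lemma exists_decoding_family {W : X → Y → ℝ} (hW : IsChannel W) {n : ℕ} {R r ρ J α κ : ℝ}
    {u : Fin (poolSize ρ n) → Fin n → X} {T : (Fin n → X) → Finset (Fin n → Y)} (hrρ : r ≤ ρ)
    (hT : ∀ v', ∑ v ∈ univ.erase v', ∑ y ∈ T (u v'), Wn W n (u v) y
      ≤ 24 * poolSize ρ n * Real.exp (-(n * J)))
    (hκ : Real.exp (-(κ / 64)) ≤ Real.exp (-(n * α)) / 4)
    (hdens : 16 * Real.exp (-(n * (ρ - r))) *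
      (1 + 24 * poolSize ρ n * Real.exp (-(n * J))) ≤ Real.exp (-(n * α)))
    (hunion : (messageCount R n : ℝ) ^ 2 * Real.exp (-(Real.exp (-(n * α)) *
          (Real.exp (-(n * (ρ - r))) * poolSize ρ n) / 2))
      + messageCount R n * Real.exp (-(2 * (Real.exp (-(n * (ρ - r))) * poolSize ρ n)))
      + 2 ^ poolSize ρ n * Real.exp (-(Real.exp (-(n * α)) * messageCount R n / 2))
      + poolSize ρ n * Real.exp (-(2 * (Real.exp (-(n * (ρ - r))) * messageCount R n)))
      + messageCount R n * Real.exp (-(Real.exp (-(n * (ρ - r))) * poolSize ρ n / 4)) < 1) :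
    ∃ V : Fin (messageCount R n) → Finset (Fin (poolSize ρ n)),
      (∀ m m', m ≠ m' → ∑ v ∈ V m, hitProb W u T (V m') v ≤ Real.exp (-(n * α)) *
        (Real.exp (-(n * (ρ - r))) * Fintype.card (Fin (poolSize ρ n)))) ∧
      IsSpreadFamily (Real.exp (-(n * (ρ - r)))) (Real.exp (-(n * α))) κ V :=
  exists_subset_family (Real.exp_pos _).le
    (Real.exp_le_one_iff.2 (neg_nonpos.2 (mul_nonneg n.cast_nonneg (sub_nonneg.2 hrρ))))
    (by positivity) (hitProb W u T) (hitProb_nonneg hW) (hitProb_le_one hW)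
    (sum_hitProb_le hW hT) hdens hκ (by simpa only [Fintype.card_fin] using hunion)

open Filter in
lemma eventually_error_le {c α τ : ℝ} (hc : τ < c) (hα : τ < α) :
    ∀ᶠ n : ℕ in atTop,
      12 * Real.exp (-(n * c)) + 2 * Real.exp (-(n * α)) ≤ Real.exp (-(n * τ)) ∧
      4 * (2 * Real.exp (-(n * α)) + 1024 * Real.exp (-(n * α))) ≤ Real.exp (-(n * τ)) := by
  filter_upwards [eventually_const_mul_exp_le (neg_lt_neg hc) 24,
    eventually_const_mul_exp_le (neg_lt_neg hα) 4104] with n h1 h2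
  simp only [mul_neg] at h1 h2
  constructor <;> linarith [Real.exp_pos (-(n * α))]

end Code

/-- **Theorem 7.** Inner bound for the three-receiver BC, with
exponentially decaying error probabilities and deterministic encoders. -/
theorem bc3_id_inner_bound_deterministic
    {X Y1 Y2 Y3 : Type} [Fintype X] [Fintype Y1] [Fintype Y2] [Fintype Y3]
    [Nonempty X] [Nonempty Y1] [Nonempty Y2] [Nonempty Y3]
    (W : X → Y1 → Y2 → Y3 → ℝ) (hW : IsBC3 W)
    (P : X → ℝ) (hP : IsPMF P)
    (R1 R2 R3 : ℝ)
    (hR10 : 0 < R1) (hR1 : R1 < min (mutInf P (marg1 W)) (mutInf P (marg2 W) + mutInf P (marg3 W)))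
    (hR20 : 0 < R2) (hR2 : R2 < min (mutInf P (marg2 W)) (mutInf P (marg1 W) + mutInf P (marg3 W)))
    (hR30 : 0 < R3) (hR3 : R3 < min (mutInf P (marg3 W)) (mutInf P (marg1 W) + mutInf P (marg2 W))) :
    ∃ τ : ℝ, 0 < τ ∧ ∃ n₀ : ℕ, ∀ n : ℕ, n₀ ≤ n →
      ∃ (k1 k2 k3 : ℕ) (Q : Fin k1 → Fin k2 → Fin k3 → (Fin n → X) → ℝ)
        (D1 : Fin k1 → Finset (Fin n → Y1))
        (D2 : Fin k2 → Finset (Fin n → Y2))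
        (D3 : Fin k3 → Finset (Fin n → Y3)),
        IsBC3IDCode n k1 k2 k3 W Q D1 D2 D3
          (Real.exp (-(n * τ))) (Real.exp (-(n * τ)))
          (Real.exp (-(n * τ))) (Real.exp (-(n * τ)))
          (Real.exp (-(n * τ))) (Real.exp (-(n * τ))) ∧
        R1 ≤ (1 / n) * Real.log (Real.log k1) ∧
        R2 ≤ (1 / n) * Real.log (Real.log k2) ∧
        R3 ≤ (1 / n) * Real.log (Real.log k3) ∧
        ∀ m1 m2 m3, ∃ x0 : Fin n → X, ∀ x, Q m1 m2 m3 x = if x = x0 then 1 else 0 := by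
  have hW1 := hW.isChannel_marg1
  have hW2 := hW.isChannel_marg2
  have hW3 := hW.isChannel_marg3
  rw [lt_min_iff] at hR1 hR2 hR3
  obtain ⟨ρ, α, r, J, hα, hpar, hρ⟩ := exists_rate_parameters (R := ![R1, R2, R3])
    (I := ![mutInf P (marg1 W), mutInf P (marg2 W), mutInf P (marg3 W)])
    (by simpa [Fin.forall_fin_succ] using ⟨hR10, hR20, hR30⟩)
    (by simpa [Fin.forall_fin_succ] using ⟨hR1.1, hR2.1, hR3.1⟩)
    (by
      simp only [Fin.forall_fin_succ, Fin.sum_univ_three]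
      refine ⟨?_, ?_, ?_, fun i => i.elim0⟩ <;> simp <;> linarith)
  obtain ⟨hRr1, hrρ1, hrJ1, hJ1⟩ :
    R1 + α < r 0 ∧ r 0 + α < ρ ∧ r 0 + α < J 0 ∧ J 0 < mutInf P (marg1 W) := hpar 0
  obtain ⟨hRr2, hrρ2, hrJ2, hJ2⟩ :
    R2 + α < r 1 ∧ r 1 + α < ρ ∧ r 1 + α < J 1 ∧ J 1 < mutInf P (marg2 W) := hpar 1
  obtain ⟨hRr3, hrρ3, hrJ3, hJ3⟩ :
    R3 + α < r 2 ∧ r 2 + α < ρ ∧ r 2 + α < J 2 ∧ J 2 < mutInf P (marg3 W) := hpar 2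
  have hρ0 : 0 ≤ ρ := by linarith
  obtain ⟨c1, hc1, hmiss1⟩ := exists_expectation_Wn_compl_likelySet_le hP hW1 hJ1
  obtain ⟨c2, hc2, hmiss2⟩ := exists_expectation_Wn_compl_likelySet_le hP hW2 hJ2
  obtain ⟨c3, hc3, hmiss3⟩ := exists_expectation_Wn_compl_likelySet_le hP hW3 hJ3
  obtain ⟨τ, hτ0, hτ⟩ := exists_between (lt_min hα (lt_min hc1 (lt_min hc2 hc3)))
  simp only [lt_min_iff] at hτ
  obtain ⟨hτα, hτ1, hτ2, hτ3⟩ := hτ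
  refine ⟨τ, hτ0, Filter.eventually_atTop.1 ?_⟩
  filter_upwards [Filter.eventually_gt_atTop 0,
    eventually_union_lt_one hR10 hα hRr1 hrρ1, eventually_union_lt_one hR20 hα hRr2 hrρ2,
    eventually_union_lt_one hR30 hα hRr3 hrρ3, eventually_density_le hρ0 hrρ1 hrJ1,
    eventually_density_le hρ0 hrρ2 hrJ2, eventually_density_le hρ0 hrρ3 hrJ3,
    eventually_exp_neg_poolSize_le hα hρ, eventually_encoder_union_lt (α := α) hR10 hR20,
    eventually_encoder_union_lt (α := α) hR20 hR10,
    eventually_encoder_union_lt (α := α) hR30 hR10,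
    eventually_error_le hτ1 hτα, eventually_error_le hτ2 hτα, eventually_error_le hτ3 hτα]
    with n hn hu1 hu2 hu3 hd1 hd2 hd3 hκ he1 he2 he3 ht1 ht2 ht3
  have hk1 := messageCount_pos R1 n
  have hk2 := messageCount_pos R2 n
  have hk3 := messageCount_pos R3 n
  obtain ⟨u, hpool⟩ := exists_pool (isPMF_prodWeight fun _ : Fin n => hP)
    (δ := fun k => Real.exp (-(n * ![c1, c2, c3] k))) (β := fun k => Real.exp (-(n * J k)))
    (e := ![fun x => ∑ y ∈ (likelySet P (marg1 W) (J 0) n x)ᶜ, Wn (marg1 W) n x y,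
      fun x => ∑ y ∈ (likelySet P (marg2 W) (J 1) n x)ᶜ, Wn (marg2 W) n x y,
      fun x => ∑ y ∈ (likelySet P (marg3 W) (J 2) n x)ᶜ, Wn (marg3 W) n x y])
    (G := ![fun x z => ∑ y ∈ likelySet P (marg1 W) (J 0) n x, Wn (marg1 W) n z y,
      fun x z => ∑ y ∈ likelySet P (marg2 W) (J 1) n x, Wn (marg2 W) n z y,
      fun x z => ∑ y ∈ likelySet P (marg3 W) (J 2) n x, Wn (marg3 W) n z y])
    (fun _ => Real.exp_pos _) (fun _ => Real.exp_pos _)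
    (fun k x => by
      fin_cases k
      exacts [sum_nonneg fun _ _ => Wn_nonneg hW1 _ _ _, sum_nonneg fun _ _ => Wn_nonneg hW2 _ _ _,
        sum_nonneg fun _ _ => Wn_nonneg hW3 _ _ _])
    (fun k x z => by
      fin_cases k
      exacts [sum_nonneg fun _ _ => Wn_nonneg hW1 _ _ _, sum_nonneg fun _ _ => Wn_nonneg hW2 _ _ _,
        sum_nonneg fun _ _ => Wn_nonneg hW3 _ _ _])
    (fun k => by
      fin_cases k
      exacts [hmiss1 n, hmiss2 n, hmiss3 n])
    (fun k x => by
      fin_cases k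
      exacts [expectation_Wn_likelySet_le hW1 _ n x, expectation_Wn_likelySet_le hW2 _ n x,
        expectation_Wn_likelySet_le hW3 _ n x])
    (poolSize_pos ρ n)
  set κ := (poolSize ρ n : ℝ) * (Real.exp (-(n * (ρ - r 0))) *
    Real.exp (-(n * (ρ - r 1))) * Real.exp (-(n * (ρ - r 2)))) with hκdef
  have hκ0 : 0 < κ := mul_pos (by exact_mod_cast poolSize_pos ρ n) (by positivity)
  obtain ⟨V1, hI1, hS1⟩ := exists_decoding_family hW1 (by linarith)
    (fun v => (hpool 0 v).2) hκ hd1 hu1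
  obtain ⟨V2, hI2, hS2⟩ := exists_decoding_family hW2 (by linarith)
    (fun v => (hpool 1 v).2) hκ hd2 hu2
  obtain ⟨V3, hI3, hS3⟩ := exists_decoding_family hW3 (by linarith)
    (fun v => (hpool 2 v).2) hκ hd3 hu3
  have hle_one : ∀ {s : ℝ}, s + α < ρ → Real.exp (-(n * (ρ - s))) ≤ 1 := fun h =>
    Real.exp_le_one_iff.2 (neg_nonpos.2 (mul_nonneg n.cast_nonneg (by linarith)))
  obtain ⟨x, hx1, hx2, hx3⟩ := exists_encoder (Real.exp_pos _).le (Real.exp_pos _).le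
    (Real.exp_pos _).le (hle_one hrρ2) (hle_one hrρ3) (Real.exp_pos _).le
    (by rw [hκdef, Fintype.card_fin]) hκ0 hS1 hS2 hS3 ⟨0, poolSize_pos ρ n⟩
    (fun _ => hitProb_nonneg hW1 _) (fun _ => hitProb_le_one hW1 _)
    (fun _ => hitProb_nonneg hW2 _) (fun _ => hitProb_le_one hW2 _)
    (fun _ => hitProb_nonneg hW3 _) (fun _ => hitProb_le_one hW3 _)
    hI1 hI2 hI3 rfl (by
      simp only [Fintype.card_prod, Fintype.card_fin]
      linarith [he1 _ (Nat.le_mul_of_pos_right _ hk3), he2 _ (Nat.le_mul_of_pos_right _ hk3),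
        he3 _ (Nat.le_mul_of_pos_right _ hk2)])
  have : Nonempty (Fin (messageCount R1 n)) := ⟨⟨0, hk1⟩⟩
  have : Nonempty (Fin (messageCount R2 n)) := ⟨⟨0, hk2⟩⟩
  have : Nonempty (Fin (messageCount R3 n)) := ⟨⟨0, hk3⟩⟩
  have hcode1 := idCodeErr_of_isReliable hW1 (fun v => (hpool 0 v).1) hx1 ht1.1 ht1.2
  have hcode2 := idCodeErr_of_isReliable hW2 (fun v => (hpool 1 v).1) hx2 ht2.1 ht2.2
  have hcode3 := idCodeErr_of_isReliable hW3 (fun v => (hpool 2 v).1) hx3 ht3.1 ht3.2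
  simp only [Fintype.card_prod, Fintype.card_fin, Fintype.sum_prod_type] at hcode1 hcode2 hcode3
  refine ⟨_, _, _, fun m1 m2 m3 z => if z = u (x m1 m2 m3) then 1 else 0, _, _, _,
    ⟨fun m1 m2 m3 => ⟨fun z => ?_, ?_⟩, hcode1, hcode2, hcode3⟩,
    le_log_log_messageCount R1 hn, le_log_log_messageCount R2 hn,
    le_log_log_messageCount R3 hn, fun m1 m2 m3 => ⟨u (x m1 m2 m3), fun _ => rfl⟩⟩
  · positivity
  · simp
end
end
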